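/- arXiv:1011.4762 — 2 statements merged into one kernel-verified Lean document; each statement's English description precedes it below -/
import Mathlib

section
/- Let μ₁, …, μₙ be probability measures on the segment [0,1] absolutely continuous with respect to Lebesgue measure, let r ≥ 2 be an integer, and put N = n(r−1)+1. Then there exist points 0 = t₀ ≤ t₁ ≤ ⋯ ≤ t_N = 1, giving segments I_j = [t_{j−1}, t_j] for j = 1, …, N, and a function χ : {1, …, N} → {1, …, r}, such that for every i = 1, …, n and every k = 1, …, r one has μᵢ(⋃_{j : χ(j) = k} I_j) = 1/r. -/
/-! The number of thieves is first taken to be a prime `p`, with `d = n(p-1)` cuts. A division of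
`[0,1]` into `d + 1` segments together with a distribution of these among the thieves is a point
of the `(d+1)`-fold join of the discrete space `ℤ/p`, on which `ℤ/p` acts by permuting the
thieves. This space is `(d-1)`-connected, and the obstruction to an unbalanced equivariant family
of shares is of the Borsuk-Ulam type. It is handled here by chains, without homology groups.

* The connectedness is replaced by an explicit equivariant system of chains `h 0, …, h d` with
  `∂(h (j+1)) = A_j (h j)`, where `A_j` is alternately `g - 1` and `∑ₓ gˣ` (`baseSys`).
  Barycentric subdivision makes its simplices as small as desired (`exists_isSys`).
* If every configuration gave some thief more than `1/p + ε` of some measure, a small simplex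
  would be labelled by the nonempty set of the pairs (measure, thief) for which this happens at
  one of its vertices. Such a set misses a thief for each measure, so it has at most `d` elements,
  and, `p` being prime, its first nonempty row has a well-defined average in `ℤ/p`, which is
  equivariant (`exists_phase`). One more subdivision, along these averages, maps the system to an
  equivariant system of chains on `ℤ/p`.
* For any such system the explicit cochain `al`, a cup product of Bockstein classes, sums to `1`
  over the translates of `h d` (`IsSys.count`). But the flags of faces of a `d`-simplex have
  `d + 1` members and at most `d` labels are available, so every list in `h d` has two equal
  consecutive entries (`sd_degenerate`), where `al` vanishes (`al_degenerate`).

Hence the shares can be made at most `1/p + ε` for every `ε > 0`, and, by compactness, equal to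
`1/p` (`exists_balanced`). A composite number of thieves is reached by splitting the parts again
(`SplitsBy.prod`), since the numbers of cuts add up correctly. -/

open MeasureTheory

namespace Necklace

/-! ### Chains of lists of points -/

section Chains

variable {p : ℕ} {X Y : Type*}

/-- Ordered chains with coefficients in `ZMod p`, augmented: the generators are all lists of points,
a list of length `j + 1` being an ordered `j`-simplex and the empty list the generator in
degree `-1`. Degrees are not separated; where a degree matters, it is imposed as a condition on
the support. -/
abbrev Chain (p : ℕ) (X : Type*) := List X →₀ ZMod p

/-- The cone with apex `a`: `a` is put in front of every list. -/
noncomputable def cone (a : X) : Chain p X →ₗ[ZMod p] Chain p X :=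
  Finsupp.lmapDomain (ZMod p) (ZMod p) (List.cons a)

/-- The chain map induced by a map of points. -/
noncomputable def push (φ : X → Y) : Chain p X →ₗ[ZMod p] Chain p Y :=
  Finsupp.lmapDomain (ZMod p) (ZMod p) (List.map φ)

/-- The boundary of one list, the alternating sum of its faces, defined by recursion through
`∂(a * l) = l - a * ∂l`. The boundary of a single point is the empty list. -/
noncomputable def bdL : List X → Chain p X
  | [] => 0
  | a :: l => Finsupp.single l 1 - cone a (bdL l)

/-- The (augmented) boundary operator. -/
noncomputable def bd : Chain p X →ₗ[ZMod p] Chain p X :=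
  Finsupp.linearCombination (ZMod p) bdL

@[simp] lemma cone_single (a : X) (l : List X) (r : ZMod p) :
    cone a (Finsupp.single l r) = Finsupp.single (a :: l) r := by
  simp [cone]

@[simp] lemma push_single (φ : X → Y) (l : List X) (r : ZMod p) :
    push φ (Finsupp.single l r) = Finsupp.single (l.map φ) r := by
  simp [push]

@[simp] lemma bd_single (l : List X) :
    bd (Finsupp.single l (1 : ZMod p)) = bdL l := by
  simp [bd]

lemma lin_ext {M : Type*} [AddCommMonoid M] [Module (ZMod p) M] {f g : Chain p X →ₗ[ZMod p] M}
    (h : ∀ l, f (Finsupp.single l 1) = g (Finsupp.single l 1)) : f = g := by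
  refine Finsupp.lhom_ext fun l r => ?_
  have : (Finsupp.single l r : Chain p X) = r • Finsupp.single l 1 := by simp
  rw [this, map_smul, map_smul, h]

/-- To place `f c` in a submodule it suffices to look at the lists allowed in the support
of `c`. -/
lemma lin_mem {M : Type*} [AddCommMonoid M] [Module (ZMod p) M] {f : Chain p X →ₗ[ZMod p] M}
    {s : Set (List X)} {W : Submodule (ZMod p) M}
    (h : ∀ l ∈ s, f (Finsupp.single l 1) ∈ W) {c : Chain p X}
    (hc : c ∈ Finsupp.supported (ZMod p) (ZMod p) s) : f c ∈ W := by
  rw [Finsupp.supported_eq_span_single] at hc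
  have : Submodule.span (ZMod p) ((fun i => Finsupp.single i (1 : ZMod p)) '' s) ≤ W.comap f := by
    rw [Submodule.span_le]
    rintro _ ⟨l, hl, rfl⟩
    exact h l hl
  exact this hc

lemma lin_eq {M : Type*} [AddCommGroup M] [Module (ZMod p) M] {f g : Chain p X →ₗ[ZMod p] M}
    {s : Set (List X)}
    (h : ∀ l ∈ s, f (Finsupp.single l 1) = g (Finsupp.single l 1)) {c : Chain p X}
    (hc : c ∈ Finsupp.supported (ZMod p) (ZMod p) s) : f c = g c := by
  have := lin_mem (f := f - g) (W := ⊥) (s := s)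
    (fun l hl => by simp [h l hl]) hc
  simpa [sub_eq_zero] using this

lemma bd_cone (a : X) (c : Chain p X) : bd (cone a c) = c - cone a (bd c) := by
  have : (bd ∘ₗ cone a : Chain p X →ₗ[ZMod p] Chain p X) = LinearMap.id - cone a ∘ₗ bd := by
    refine lin_ext fun l => ?_
    simp [bdL]
  exact LinearMap.congr_fun this c

lemma bd_bdL (l : List X) : bd (bdL l : Chain p X) = 0 := by
  induction l with
  | nil => simp [bdL]
  | cons a l ih => simp [bdL, bd_cone, ih]

lemma push_cone (φ : X → Y) (a : X) (c : Chain p X) :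
    push φ (cone a c) = cone (φ a) (push φ c) := by
  have : (push φ ∘ₗ cone a : Chain p X →ₗ[ZMod p] Chain p Y) = cone (φ a) ∘ₗ push φ := by
    refine lin_ext fun l => ?_
    simp
  exact LinearMap.congr_fun this c

lemma push_bdL (φ : X → Y) (l : List X) :
    push φ (bdL l : Chain p X) = bdL (l.map φ) := by
  induction l with
  | nil => simp [bdL]
  | cons a l ih => simp [bdL, push_cone, ih]

lemma bd_push (φ : X → Y) (c : Chain p X) : bd (push φ c) = push φ (bd c) := by
  have : (bd ∘ₗ push φ : Chain p X →ₗ[ZMod p] Chain p Y) = push φ ∘ₗ bd := by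
    refine lin_ext fun l => ?_
    simp [push_bdL]
  exact LinearMap.congr_fun this c

lemma push_push {Z : Type*} (φ : X → Y) (ψ : Y → Z) (c : Chain p X) :
    push ψ (push φ c) = push (ψ ∘ φ) c := by
  have : (push ψ ∘ₗ push φ : Chain p X →ₗ[ZMod p] Chain p Z) = push (ψ ∘ φ) := by
    refine lin_ext fun l => ?_
    simp
  exact LinearMap.congr_fun this c

lemma bdL_mem (l : List X) : (bdL l : Chain p X) ∈
    Finsupp.supported (ZMod p) (ZMod p) {q | q.Sublist l ∧ q.length + 1 = l.length} := by
  induction l with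
  | nil => simp [bdL]
  | cons a l ih =>
    refine Submodule.sub_mem _ (Finsupp.single_mem_supported _ _ ⟨by simp, by simp⟩) ?_
    refine lin_mem (fun q hq => ?_) ih
    rw [cone_single]
    exact Finsupp.single_mem_supported _ _ ⟨by simpa using hq.1, by simpa using hq.2⟩

/-- The chain map that subdivides simplices barycentrically, for an arbitrary choice `b l` of a
barycentre of each list `l`; the natural number is the common length of the lists it is meant
for. With `b` the barycentre in a vector space this is the usual subdivision; with `b l` a label
depending on the set of vertices, it sends a simplex to the chain of labels of the simplices of its
barycentric subdivision. -/
noncomputable def sd (b : List X → Y) : ℕ → Chain p X →ₗ[ZMod p] Chain p Y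
  | 0 => Finsupp.linearCombination (ZMod p) fun _ => Finsupp.single [] 1
  | n + 1 => Finsupp.linearCombination (ZMod p) fun l => cone (b l) (sd b n (bdL l))

lemma sd_zero_single (b : List X → Y) (l : List X) :
    sd b 0 (Finsupp.single l (1 : ZMod p)) = Finsupp.single [] 1 := by
  simp [sd]

lemma sd_succ_single (b : List X → Y) (n : ℕ) (l : List X) :
    sd b (n + 1) (Finsupp.single l (1 : ZMod p)) = cone (b l) (sd b n (bdL l)) := by
  simp [sd]

lemma bd_sd (b : List X → Y) (n : ℕ) (c : Chain p X) :
    bd (sd b (n + 1) c) = sd b n (bd c) := by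
  induction n generalizing c with
  | zero =>
    have : (bd ∘ₗ sd b 1 : Chain p X →ₗ[ZMod p] Chain p Y) = sd b 0 ∘ₗ bd := by
      refine lin_ext fun l => ?_
      have h0 : (bd ∘ₗ sd b 0 : Chain p X →ₗ[ZMod p] Chain p Y) = 0 := by
        refine lin_ext fun l => ?_
        simp [sd, bdL]
      have h1 := LinearMap.congr_fun h0 (bdL l)
      simp only [LinearMap.comp_apply, LinearMap.zero_apply] at h1
      simp [sd_succ_single, bd_cone, h1]
    exact LinearMap.congr_fun this c
  | succ n ih =>
    have : (bd ∘ₗ sd b (n + 1 + 1) : Chain p X →ₗ[ZMod p] Chain p Y) = sd b (n + 1) ∘ₗ bd := by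
      refine lin_ext fun l => ?_
      simp [sd_succ_single b (n + 1), bd_cone, ih, bd_bdL]
    exact LinearMap.congr_fun this c

/-- Naturality of the subdivision under maps compatible with the chosen barycentres. -/
lemma sd_push {X' Y' : Type*} (b : List X → Y) (b' : List X' → Y') (φ : X → X') (ψ : Y → Y')
    (P : List X → Prop) (hP : ∀ l l', P l → l'.Sublist l → P l')
    (hb : ∀ l, l ≠ [] → P l → b' (l.map φ) = ψ (b l)) (n : ℕ) (c : Chain p X)
    (hc : c ∈ Finsupp.supported (ZMod p) (ZMod p) {l | l.length = n ∧ P l}) :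
    sd b' n (push φ c) = push ψ (sd b n c) := by
  induction n generalizing c with
  | zero =>
    refine lin_eq (f := sd b' 0 ∘ₗ push φ) (g := push ψ ∘ₗ sd b 0) (fun l _ => ?_) hc
    simp [sd]
  | succ n ih =>
    refine lin_eq (f := sd b' (n + 1) ∘ₗ push φ) (g := push ψ ∘ₗ sd b (n + 1))
      (fun l hl => ?_) hc
    have hne : l ≠ [] := by
      rintro rfl
      simp at hl
    simp only [LinearMap.comp_apply, push_single, sd_succ_single, push_cone, hb l hne hl.2,
      ← push_bdL]
    rw [ih]
    refine Finsupp.supported_mono ?_ (bdL_mem l)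
    rintro q ⟨hq, hq'⟩
    exact ⟨by have := hl.1; omega, hP _ _ hl.2 hq⟩

variable [NeZero p]

/-- The operators `g - 1` (for even `j`) and `∑ₓ gˣ` (for odd `j`) of the periodic resolution of
the group `ZMod p`, where `g = act 1`. Consecutive ones compose to zero. -/
noncomputable def opA (act : ZMod p → X → X) (j : ℕ) : Chain p X →ₗ[ZMod p] Chain p X :=
  if Even j then push (act 1) - LinearMap.id else ∑ x, push (act x)

lemma bd_opA (act : ZMod p → X → X) (j : ℕ) (c : Chain p X) :
    bd (opA act j c) = opA act j (bd c) := by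
  unfold opA
  split_ifs <;> simp [bd_push]

lemma opA_opA (act : ZMod p → X → X) (hact : ∀ x y v, act x (act y v) = act (x + y) v)
    (j : ℕ) (c : Chain p X) : opA act (j + 1) (opA act j c) = 0 := by
  have key : ∀ x y, push (act x) (push (act y) c) = push (act (x + y)) c := by
    intro x y
    rw [push_push]
    congr 2
    funext v
    exact hact x y v
  unfold opA
  by_cases h : Even j
  · have h' : ¬ Even (j + 1) := by simpa [Nat.even_add_one] using h
    simp only [h, h', if_true, if_false, LinearMap.sub_apply, LinearMap.id_apply,
      LinearMap.sum_apply, map_sub, key]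
    rw [sub_eq_zero]
    exact Fintype.sum_equiv (Equiv.addRight 1) _ _ (fun x => rfl)
  · have h' : Even (j + 1) := by simpa [Nat.even_add_one] using h
    simp only [h, h', if_true, if_false, LinearMap.sub_apply, LinearMap.id_apply,
      LinearMap.sum_apply, map_sum, key]
    rw [Finset.sum_sub_distrib, sub_eq_zero]
    exact Fintype.sum_equiv (Equiv.addLeft 1) _ _ (fun x => rfl)

lemma opA_empty (act : ZMod p → X → X) :
    opA act 0 (Finsupp.single [] 1) = 0 := by
  simp [opA]

/-- An equivariant system of chains of dimensions `0, …, d`: `h 0` has augmentation one,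
`∂(h (j + 1)) = A_j (h j)` with `A_j` as in `opA`, and the simplices of each `h j` satisfy `P`.
It is the image of the first `d + 1` generators of the periodic resolution of `ZMod p`; it replaces
a `(d-1)`-connected free `ZMod p`-space in what follows. -/
structure IsSys (d : ℕ) (P : List X → Prop) (act : ZMod p → X → X) (h : ℕ → Chain p X) :
    Prop where
  zero : bd (h 0) = Finsupp.single [] 1
  succ : ∀ j < d, bd (h (j + 1)) = opA act j (h j)
  supp : ∀ j ≤ d, h j ∈ Finsupp.supported (ZMod p) (ZMod p) {l | l.length = j + 1 ∧ P l}

/-- Subdividing an equivariant system along an equivariant choice of barycentres gives an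
equivariant system. -/
lemma IsSys.sd {d : ℕ} {P : List X → Prop} {act : ZMod p → X → X} {h : ℕ → Chain p X}
    (H : IsSys d P act h) {act' : ZMod p → Y → Y} {P' : List Y → Prop} (b : List X → Y)
    (hP : ∀ l l', P l → l'.Sublist l → P l')
    (hb : ∀ x l, l ≠ [] → P l → b (l.map (act x)) = act' x (b l))
    (hP' : ∀ n ≤ d, ∀ l, l.length = n + 1 → P l → Necklace.sd b (n + 1) (Finsupp.single l 1) ∈
      Finsupp.supported (ZMod p) (ZMod p) {q | q.length = n + 1 ∧ P' q}) :
    IsSys d P' act' (fun j => Necklace.sd b (j + 1) (h j)) where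
  zero := by simp only [bd_sd, H.zero, sd_zero_single]
  succ := by
    intro j hj
    have key : ∀ x, Necklace.sd b (j + 1) (push (act x) (h j)) =
        push (act' x) (Necklace.sd b (j + 1) (h j)) := fun x =>
      sd_push b b (act x) (act' x) P hP (fun l hl hl' => hb x l hl hl') (j + 1) (h j)
        (H.supp j hj.le)
    rw [bd_sd, H.succ j hj]
    unfold opA
    split_ifs <;> simp [key]
  supp := by
    intro j hj
    exact lin_mem (fun l hl => hP' j hj l hl.1 hl.2) (H.supp j hj)

/-! ### Equivariant cochains on `ZMod p` -/

/-- The carry cochain: `b - a` computed with representatives in `[0, p)` equals its own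
representative minus `p * up a b`. -/
def up (a b : ZMod p) : ZMod p := if b.val < a.val then 1 else 0

/-- The coboundary of `up`, the Bockstein cocycle. Unlike `up`, it is invariant under translation
(`bet_shift`). -/
def bet (a b c : ZMod p) : ZMod p := up b c - up a c + up a b

/-- A cochain on lists of residues that pairs with the periodic resolution: in degree `2m` it is
`β ⌣ ⋯ ⌣ β ⌣ δ` with `β = bet` and `δ` the indicator of `-1`, and in degree `2m + 1` it is
`β ⌣ ⋯ ⌣ β ⌣ up`. -/
def al : List (ZMod p) → ZMod p
  | [] => 1
  | [k] => if k = -1 then 1 else 0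
  | [a, b] => up a b
  | a :: b :: c :: l => bet a b c * al (c :: l)

/-- The cochain `al` as a linear functional on chains. -/
noncomputable def alc : Chain p (ZMod p) →ₗ[ZMod p] ZMod p :=
  Finsupp.linearCombination (ZMod p) al

omit [NeZero p] in
@[simp] lemma alc_single (l : List (ZMod p)) :
    alc (Finsupp.single l (1 : ZMod p)) = al l := by
  simp [alc]

lemma val_add_one_eq (a : ZMod p) :
    (1 + a).val = if a = -1 then 0 else a.val + 1 := by
  split_ifs with h
  · simp [h]
  · rw [add_comm]
    have hp : 0 < p := Nat.pos_of_ne_zero (NeZero.ne p)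
    rcases Nat.lt_or_ge 1 p with h1 | h1
    · have : Fact (1 < p) := ⟨h1⟩
      apply ZMod.val_add_of_lt _ |>.trans
      · rw [ZMod.val_one]
      · rw [ZMod.val_one]
        have := ZMod.val_lt a
        rcases Nat.lt_or_ge (a.val + 1) p with h2 | h2
        · exact h2
        · exfalso
          apply h
          have h3 : a.val + 1 = p := by omega
          have h4 : ((a.val + 1 : ℕ) : ZMod p) = 0 := by rw [h3]; simp
          push_cast at h4
          rw [ZMod.natCast_zmod_val] at h4
          exact eq_neg_of_add_eq_zero_left h4
    · obtain rfl : p = 1 := by omega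
      exact absurd (Subsingleton.elim _ _) h

lemma up_shift (a b : ZMod p) : up (1 + a) (1 + b) - up a b =
    (if b = -1 then 1 else 0) - (if a = -1 then 1 else 0) := by
  unfold up
  rw [val_add_one_eq, val_add_one_eq]
  have hm : ∀ a : ZMod p, a ≠ -1 → a.val < (-1 : ZMod p).val := by
    intro a ha
    have h1 := val_add_one_eq a
    have h2 := val_add_one_eq (-1 : ZMod p)
    have hp : 0 < p := Nat.pos_of_ne_zero (NeZero.ne p)
    rw [if_neg ha] at h1
    have h3 := ZMod.val_lt (1 + a)
    have h4 : (-1 : ZMod p).val + 1 = p := by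
      obtain ⟨m, rfl⟩ : ∃ m, p = m + 1 := ⟨p - 1, by omega⟩
      rw [ZMod.val_neg_one]
    omega
  by_cases ha : a = -1 <;> by_cases hb : b = -1
  · simp [ha, hb]
  · have := hm b hb
    subst ha
    simp [hb, this]
  · have := hm a ha
    subst hb
    simp [ha, this.le]
  · simp [ha, hb]

lemma bet_shift (x a b c : ZMod p) : bet (x + a) (x + b) (x + c) = bet a b c := by
  have h1 : ∀ a b c : ZMod p, bet (1 + a) (1 + b) (1 + c) = bet a b c := by
    intro a b c
    unfold bet
    linear_combination up_shift b c - up_shift a c + up_shift a b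
  have h2 : ∀ m : ℕ, bet ((m : ZMod p) + a) (m + b) (m + c) = bet a b c := by
    intro m
    induction m with
    | zero => simp
    | succ m ih =>
      rw [← ih, ← h1 (m + a)]
      push_cast
      congr 1 <;> ring
  have := h2 x.val
  simpa using this

omit [NeZero p] in
lemma bet_cocycle (a b c d : ZMod p) :
    bet b c d - bet a c d + bet a b d - bet a b c = 0 := by
  unfold bet; ring

omit [NeZero p] in
lemma al_cons3 (a b c : ZMod p) (q : Chain p (ZMod p)) :
    alc (cone a (cone b (cone c q))) = bet a b c * alc (cone c q) := by
  have : alc ∘ₗ cone a ∘ₗ cone b ∘ₗ cone c = bet a b c • (alc ∘ₗ cone c) := by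
    refine lin_ext fun l => ?_
    simp [al]
  exact LinearMap.congr_fun this q

omit [NeZero p] in
/-- The Leibniz rule for `al = β ⌣ al` in the presence of the cocycle identity for `β = bet`. -/
lemma al_bd_step (a b c d : ZMod p) (l : List (ZMod p)) :
    alc (bdL (a :: b :: c :: d :: l)) = bet a b c * alc (bdL (c :: d :: l)) := by
  have := bet_cocycle a b c d
  have e : (bdL (a :: b :: c :: d :: l) : Chain p (ZMod p)) =
    Finsupp.single (b :: c :: d :: l) 1 - Finsupp.single (a :: c :: d :: l) 1
     + Finsupp.single (a :: b :: d :: l) 1 - cone a (cone b (cone c (bdL (d :: l)))) := by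
    rw [bdL, bdL, bdL]; simp; abel
  have e2 : (bdL (c :: d :: l) : Chain p (ZMod p)) =
    Finsupp.single (d :: l) 1 - cone c (bdL (d :: l)) := by
    rw [bdL]
  rw [e, e2]
  simp only [map_sub, map_add, al_cons3, alc_single, al]
  linear_combination al (d :: l) * this

/-- In odd degrees the coboundary of `al` is `(g - 1) al`. -/
lemma al_shift_even (m : ℕ) (l : List (ZMod p)) (hl : l.length = 2 * m + 2) :
    alc (bdL l) = al (l.map (1 + ·)) - al l := by
  induction m generalizing l with
  | zero =>
    match l, hl with
    | [a, b], _ =>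
      simp [bdL, al]
      exact (up_shift a b).symm
  | succ m ih =>
    match l, hl with
    | a :: b :: c :: d :: l, hl =>
      rw [al_bd_step, ih (c :: d :: l) (by simp at hl ⊢; omega)]
      simp only [List.map_cons, al, bet_shift]
      ring

/-- In even degrees the coboundary of `al` is `(∑ₓ gˣ) al`. -/
lemma al_shift_odd (m : ℕ) (l : List (ZMod p)) (hl : l.length = 2 * m + 1) :
    alc (bdL l) = ∑ x, al (l.map (x + ·)) := by
  induction m generalizing l with
  | zero =>
    match l, hl with
    | [a], _ =>
      simp [bdL, al, ← eq_sub_iff_add_eq]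
  | succ m ih =>
    match l, hl with
    | [a, b, c], hl =>
      have e : ∀ x : ZMod p, (x + c = -1) = (x = -1 - c) := fun x => by
        rw [eq_sub_iff_add_eq]
      simp only [List.map_cons, List.map_nil, al, bet_shift, e]
      simp [bdL, al, bet]
      ring
    | a :: b :: c :: d :: l, hl =>
      rw [al_bd_step, ih (c :: d :: l) (by simp at hl ⊢; omega)]
      simp only [List.map_cons, al, bet_shift, Finset.mul_sum]

omit [NeZero p] in
/-- `al` is a normalised cochain: it vanishes on lists with two equal consecutive entries. -/
lemma al_degenerate (l : List (ZMod p)) (hl : ¬ l.IsChain (· ≠ ·)) : al l = 0 := by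
  induction l using al.induct with
  | case1 => simp at hl
  | case2 => simp at hl
  | case3 k => simp at hl
  | case4 a b => simp at hl; simp [al, up, hl]
  | case5 a b c l ih =>
    simp only [al]
    by_cases h : (c :: l).IsChain (· ≠ ·)
    · have : a = b ∨ b = c := by
        by_contra hcon
        push Not at hcon
        exact hl (by simp [hcon, h])
      have : bet a b c = 0 := by
        rcases this with rfl | rfl <;> simp [bet, up]
      simp [this]
    · simp [ih h]

/-- In an equivariant system of chains on `ZMod p` itself, the sum of `al` over all translates of
`h j` is `1` for every `j`. In degree `0` this is the augmentation of `h 0`, and the identities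
`al_shift_even` and `al_shift_odd` carry the value from one degree to the next. -/
lemma IsSys.count {d : ℕ} {P : List (ZMod p) → Prop} {h : ℕ → Chain p (ZMod p)}
    (H : IsSys d P (fun x k => x + k) h) :
    ∀ j ≤ d, ∑ x, alc (push (fun k => x + k) (h j)) = 1 := by
  have odd : ∀ j ≤ d, Even j → alc (bd (h j)) = ∑ x, alc (push (fun k => x + k) (h j)) := by
    intro j hj he
    have := lin_eq (f := alc ∘ₗ bd) (g := ∑ x : ZMod p, alc ∘ₗ push (fun k => x + k))
      (s := {l | l.length = j + 1 ∧ P l}) ?_ (H.supp j hj)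
    · simpa using this
    · intro l hl
      obtain ⟨m, hm⟩ := he
      have := al_shift_odd m l (by rw [hl.1]; omega)
      simpa using this
  have even : ∀ j ≤ d, ¬ Even j → ∀ y : ZMod p, alc (push (fun k => y + k) (bd (h j))) =
      alc (push (fun k => y + 1 + k) (h j)) - alc (push (fun k => y + k) (h j)) := by
    intro j hj he y
    have := lin_eq (f := alc ∘ₗ push (fun k => y + k) ∘ₗ bd)
      (g := alc ∘ₗ push (fun k => y + 1 + k) - alc ∘ₗ push (fun k => y + k))
      (s := {l | l.length = j + 1 ∧ P l}) ?_ (H.supp j hj)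
    · simpa using this
    · intro l hl
      obtain ⟨m, hm⟩ := Nat.not_even_iff_odd.1 he
      have := al_shift_even m (l.map (y + ·)) (by rw [List.length_map, hl.1]; omega)
      rw [← push_bdL] at this
      simp [this, Function.comp_def, add_left_comm, add_assoc]
  intro j
  induction j with
  | zero =>
    intro hj
    rw [← odd 0 hj (by simp), H.zero]
    simp [al]
  | succ j ih =>
    intro hj
    by_cases he : Even (j + 1)
    · rw [← odd _ hj he, H.succ j (by omega), ← ih (by omega)]
      have : ¬ Even j := by simpa [Nat.even_add_one] using he
      simp [opA, this]
    · rw [← ih (by omega), ← sub_eq_zero, ← Finset.sum_sub_distrib]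
      have he' : Even j := by simpa [Nat.even_add_one] using he
      -- The difference `al (y + h (j+1)) - al (y + h j)` does not depend on `y`, so its sum over
      -- the `p` values of `y` vanishes.
      have hc : ∀ y : ZMod p,
          alc (push (fun k => y + 1 + k) (h (j + 1))) - alc (push (fun k => y + 1 + k) (h j)) =
          alc (push (fun k => y + k) (h (j + 1))) - alc (push (fun k => y + k) (h j)) := by
        intro y
        have h1 := even (j + 1) hj he y
        rw [H.succ j (by omega)] at h1
        simp only [opA, he', if_true, LinearMap.sub_apply, LinearMap.id_apply, map_sub,
          push_push] at h1
        have h2 : ((fun k : ZMod p => y + k) ∘ fun k => 1 + k) = fun k => y + 1 + k := by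
          funext k; simp [add_assoc]
        rw [h2] at h1
        linear_combination -h1
      have hc' : ∀ m : ℕ,
          alc (push (fun k => (m : ZMod p) + k) (h (j + 1))) -
            alc (push (fun k => (m : ZMod p) + k) (h j)) =
          alc (push (fun k => 0 + k) (h (j + 1))) - alc (push (fun k => 0 + k) (h j)) := by
        intro m
        induction m with
        | zero => simp
        | succ m ihm =>
          rw [← ihm, ← hc m]
          push_cast
          rfl
      have hc'' : ∀ y : ZMod p,
          alc (push (fun k => y + k) (h (j + 1))) - alc (push (fun k => y + k) (h j)) =
          alc (push (fun k => 0 + k) (h (j + 1))) - alc (push (fun k => 0 + k) (h j)) := by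
        intro y
        have := hc' y.val
        rwa [ZMod.natCast_zmod_val] at this
      rw [Finset.sum_congr rfl (fun y _ => hc'' y)]
      simp

end Chains

/-! ### Labels and phases -/

section Labels

variable {p : ℕ} {X Y : Type*}

/-- A translation-equivariant map from the nonempty sets of labels containing no full row
`{i} × ZMod p` to `ZMod p`: the average of the first nonempty row. The division is legitimate
because the number of elements of that row lies strictly between `0` and `p`. -/
lemma exists_phase [Fact p.Prime] (n : ℕ) :
    ∃ φ : Finset (Fin n × ZMod p) → ZMod p, ∀ A : Finset (Fin n × ZMod p), A.Nonempty →
      (∀ i, ∃ k, (i, k) ∉ A) → ∀ x, φ (A.image fun ik => (ik.1, x + ik.2)) = x + φ A := by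
  classical
  let row : Finset (Fin n × ZMod p) → Fin n → Finset (ZMod p) :=
    fun A i => Finset.univ.filter fun k => (i, k) ∈ A
  have hrow : ∀ A x i, row (A.image fun ik => (ik.1, x + ik.2)) i =
      (row A i).image (x + ·) := by
    intro A x i
    ext k
    simp only [row, Finset.mem_filter, Finset.mem_univ, true_and, Finset.mem_image, Prod.mk.injEq,
      Prod.exists]
    constructor
    · rintro ⟨i', k', h, rfl, rfl⟩
      exact ⟨k', h, rfl⟩
    · rintro ⟨k', h, rfl⟩
      exact ⟨i, k', h, rfl, rfl⟩
  let φ : Finset (Fin n × ZMod p) → ZMod p := fun A =>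
    if h : ∃ i, (row A i).Nonempty then
      (∑ k ∈ row A h.choose, k) * ((row A h.choose).card : ZMod p)⁻¹ else 0
  refine ⟨φ, fun A hA hadm x => ?_⟩
  have hne : ∃ i, (row A i).Nonempty := by
    obtain ⟨⟨i, k⟩, h⟩ := hA
    exact ⟨i, k, by simpa [row] using h⟩
  have hpred : (fun i => (row (A.image fun ik => (ik.1, x + ik.2)) i).Nonempty) =
      fun i => (row A i).Nonempty := by
    funext i
    rw [hrow, Finset.image_nonempty]
  have hne' : ∃ i, (row (A.image fun ik => (ik.1, x + ik.2)) i).Nonempty := by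
    simpa only [hrow, Finset.image_nonempty] using hne
  -- The chosen row is the same, because the predicates `row · i ≠ ∅` coincide.
  have hch : hne'.choose = hne.choose := by
    unfold Exists.choose
    congr 1
  simp only [φ]
  rw [dif_pos hne', dif_pos hne, hch, hrow, Finset.sum_image (by simp),
    Finset.card_image_of_injective _ (add_right_injective x), Finset.sum_add_distrib]
  generalize hi : hne.choose = i
  have h1 : (row A i).Nonempty := hi ▸ hne.choose_spec
  have h2 : ((row A i).card : ZMod p) ≠ 0 := by
    intro h0
    rw [ZMod.natCast_eq_zero_iff] at h0
    have h3 : (row A i).card < p := by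
      obtain ⟨k, hk⟩ := hadm i
      have : row A i ⊂ Finset.univ := by
        rw [Finset.ssubset_univ_iff]
        intro h
        apply hk
        have : k ∈ row A i := h ▸ Finset.mem_univ k
        simpa [row] using this
      simpa [ZMod.card] using Finset.card_lt_card this
    exact absurd (Nat.le_of_dvd h1.card_pos h0) (by omega)
  rw [Finset.sum_const, nsmul_eq_mul]
  field_simp

/-- Every simplex of the subdivision starts with the barycentre of the whole simplex. -/
lemma sd_head (b : List X → Y) (n : ℕ) (l : List X) :
    sd b (n + 1) (Finsupp.single l (1 : ZMod p)) ∈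
      Finsupp.supported (ZMod p) (ZMod p) {q | ∃ q', q = b l :: q'} := by
  rw [sd_succ_single]
  refine lin_mem (s := Set.univ) (fun q _ => ?_) (by simp)
  rw [cone_single]
  exact Finsupp.single_mem_supported _ _ ⟨q, rfl⟩

/-- A maximal flag of nonempty faces of a simplex `l` with `n` vertices has `n` members. If the
label set is monotone, nonempty on each face and has fewer than `n` elements on `l`, then two
consecutive members of the flag carry the same label set, hence the same label. -/
lemma sd_degenerate {L : Type*} (Λ : List X → Finset L) (φ : Finset L → Y)
    (hmono : ∀ l l', l'.Sublist l → Λ l' ⊆ Λ l) (n : ℕ) (l : List X) (hl : l.length = n)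
    (hne : ∀ l', l'.Sublist l → l' ≠ [] → (Λ l').Nonempty) (hcard : (Λ l).card < n) :
    sd (fun l => φ (Λ l)) n (Finsupp.single l (1 : ZMod p)) ∈
      Finsupp.supported (ZMod p) (ZMod p) {q | ¬ q.IsChain (· ≠ ·)} := by
  induction n generalizing l with
  | zero => omega
  | succ n ih =>
    have h0 : 0 < (Λ l).card := (hne l (List.Sublist.refl l) (by rintro rfl; simp at hl)).card_pos
    obtain ⟨n, rfl⟩ : ∃ m, n = m + 1 := ⟨n - 1, by omega⟩
    rw [sd_succ_single]
    rw [← LinearMap.comp_apply]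
    refine lin_mem (fun l' hl' => ?_) (bdL_mem l)
    obtain ⟨hsub, hlen⟩ := hl'
    rw [LinearMap.comp_apply]
    -- Either the first two label sets agree, or passing to the facet loses a label.
    by_cases heq : Λ l' = Λ l
    · refine lin_mem (fun q hq => ?_) (sd_head (p := p) (fun l => φ (Λ l)) n l')
      obtain ⟨q', rfl⟩ := hq
      rw [cone_single]
      refine Finsupp.single_mem_supported _ _ ?_
      simp [heq]
    · have hlt : (Λ l').card < (Λ l).card :=
        Finset.card_lt_card ((hmono l l' hsub).ssubset_of_ne heq)
      refine lin_mem (fun q hq => ?_) (ih l' (by omega)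
        (fun l'' h => hne l'' (h.trans hsub)) (by omega))
      rw [cone_single]
      refine Finsupp.single_mem_supported _ _ ?_
      intro h
      exact hq h.tail

end Labels

/-! ### Barycentric subdivision shrinks simplices -/

section Bary

variable {p : ℕ} {E : Type*} [NormedAddCommGroup E] [NormedSpace ℝ E]

/-- The barycentre of a list of vectors (`0` for the empty list). -/
noncomputable def bary (l : List E) : E := (l.length : ℝ)⁻¹ • l.sum

lemma bary_mem {s : Set E} (hs : Convex ℝ s) {l : List E} (hl : l ≠ []) (h : ∀ v ∈ l, v ∈ s) :
    bary l ∈ s := by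
  have : bary l = ∑ i : Fin l.length, (l.length : ℝ)⁻¹ • l[i] := by
    rw [← Finset.smul_sum, bary]
    congr 1
    exact (Fin.sum_univ_getElem l).symm
  rw [this]
  have hpos : (l.length : ℝ) ≠ 0 := by simpa using hl
  refine hs.sum_mem (fun i _ => by positivity) ?_ (fun i _ => h _ (by simp))
  simp [hpos]

lemma norm_sum_sub_le (l : List E) (v : E) (D : ℝ) (h : ∀ w ∈ l, dist v w ≤ D) :
    ‖l.sum - (l.length : ℝ) • v‖ ≤ l.length * D := by
  induction l with
  | nil => simp
  | cons a l ih =>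
    have h1 := ih fun w hw => h w (by simp [hw])
    have h2 := h a (by simp)
    rw [dist_comm, dist_eq_norm] at h2
    have : (a :: l).sum - ((a :: l).length : ℝ) • v =
        (a - v) + (l.sum - (l.length : ℝ) • v) := by
      simp [add_smul]; abel
    rw [this]
    refine (norm_add_le _ _).trans ?_
    push_cast [List.length_cons]
    linarith

lemma bary_dist {l : List E} {D : ℝ} (h : ∀ v ∈ l, ∀ w ∈ l, dist v w ≤ D) {v : E}
    (hv : v ∈ l) : dist (bary l) v ≤ (1 - (l.length : ℝ)⁻¹) * D := by
  classical
  have hperm := List.perm_cons_erase hv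
  generalize l.erase v = l' at hperm
  have hsum : l.sum = v + l'.sum := by simpa using hperm.sum_eq
  have hlen : l.length = l'.length + 1 := by simpa using hperm.length_eq
  have h1 := norm_sum_sub_le l' v D fun w hw => h v hv w (hperm.symm.subset (by simp [hw]))
  have hpos : (0 : ℝ) < (l'.length : ℝ) + 1 := by positivity
  have : bary l - v = ((l'.length : ℝ) + 1)⁻¹ • (l'.sum - (l'.length : ℝ) • v) := by
    rw [bary, hsum, hlen]
    push_cast
    rw [eq_inv_smul_iff₀ hpos.ne', smul_sub, smul_inv_smul₀ hpos.ne', add_smul]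
    simp; abel
  rw [dist_eq_norm, this, norm_smul, hlen, Real.norm_of_nonneg (by positivity)]
  push_cast
  calc _ ≤ ((l'.length : ℝ) + 1)⁻¹ * (l'.length * D) := by gcongr
    _ = _ := by field_simp; ring

/-- Barycentric subdivision of a simplex with at most `N` vertices stays in its convex hull and
multiplies the diameter by at most `1 - 1/N`. -/
lemma sd_bary (N : ℕ) (D : ℝ) (hD : 0 ≤ D) (n : ℕ) (hn : n ≤ N) (l : List E) (hl : l.length = n)
    (h : ∀ v ∈ l, ∀ w ∈ l, dist v w ≤ D) :
    sd bary n (Finsupp.single l (1 : ZMod p)) ∈ Finsupp.supported (ZMod p) (ZMod p)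
      {q | q.length = n ∧ (∀ v ∈ q, v ∈ convexHull ℝ {w | w ∈ l}) ∧
        ∀ v ∈ q, ∀ w ∈ q, dist v w ≤ (1 - (N : ℝ)⁻¹) * D} := by
  induction n generalizing l with
  | zero =>
    rw [sd_zero_single]
    exact Finsupp.single_mem_supported _ _ (by simp)
  | succ n ih =>
    have hne : l ≠ [] := by rintro rfl; simp at hl
    have hN : (1 : ℝ) ≤ N := by exact_mod_cast (show 1 ≤ N by omega)
    have hD' : 0 ≤ (1 - (N : ℝ)⁻¹) * D :=
      mul_nonneg (sub_nonneg.2 (inv_le_one_of_one_le₀ hN)) hD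
    rw [sd_succ_single, ← LinearMap.comp_apply]
    refine lin_mem (fun l' hl' => ?_) (bdL_mem l)
    obtain ⟨hsub, hlen⟩ := hl'
    rw [LinearMap.comp_apply]
    refine lin_mem (fun q hq => ?_) (ih (by omega) l' (by omega)
      fun v hv w hw => h v (hsub.subset hv) w (hsub.subset hw))
    rw [cone_single]
    refine Finsupp.single_mem_supported _ _ ?_
    obtain ⟨hq1, hq2, hq3⟩ := hq
    have hq2' : ∀ v ∈ q, v ∈ convexHull ℝ {w | w ∈ l} := fun v hv =>
      convexHull_mono (fun w hw => hsub.subset hw) (hq2 v hv)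
    have hb : ∀ v ∈ convexHull ℝ {w | w ∈ l}, dist v (bary l) ≤ (1 - (N : ℝ)⁻¹) * D := by
      intro v hv
      have : convexHull ℝ {w | w ∈ l} ⊆ Metric.closedBall (bary l) ((1 - (N : ℝ)⁻¹) * D) := by
        refine convexHull_min (fun w hw => ?_) (convex_closedBall _ _)
        rw [Metric.mem_closedBall, dist_comm]
        refine (bary_dist h hw).trans ?_
        rw [hl]
        gcongr
      exact this hv
    refine ⟨by simp [hq1], ?_, ?_⟩
    · intro v hv
      rcases List.mem_cons.1 hv with rfl | hv
      · exact bary_mem (convex_convexHull _ _) hne fun w hw => subset_convexHull _ _ hw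
      · exact hq2' v hv
    · intro v hv w hw
      rcases List.mem_cons.1 hv with rfl | hv <;> rcases List.mem_cons.1 hw with rfl | hw
      · simpa using hD'
      · rw [dist_comm]; exact hb w (hq2' w hw)
      · exact hb v (hq2' v hv)
      · exact hq3 v hv w hw

end Bary

/-! ### The configuration space -/

section Config

variable {p d : ℕ}

/-- The ambient space of configurations: `v j c` is the length of the `j`-th segment if this segment
is given to the thief `c`, and `0` otherwise. Allowing arbitrary real entries makes it a vector
space; the actual configurations form the union of the sets `face χ`. -/
abbrev Conf (p d : ℕ) := Fin (d + 1) → ZMod p → ℝ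

/-- The cyclic group permutes the thieves. -/
def act (x : ZMod p) (v : Conf p d) : Conf p d := fun j c => v j (c - x)

lemma act_act (x y : ZMod p) (v : Conf p d) : act x (act y v) = act (x + y) v := by
  funext j c
  simp only [act]
  congr 1
  ring

/-- The configurations in which the `j`-th segment belongs to the thief `χ j`. The faces are the
maximal simplices of the `(d + 1)`-fold join of the discrete set `ZMod p`. -/
def face [NeZero p] (χ : Fin (d + 1) → ZMod p) : Set (Conf p d) :=
  {v | (∀ j c, 0 ≤ v j c) ∧ ∑ j, ∑ c, v j c = 1 ∧ ∀ j c, c ≠ χ j → v j c = 0}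

/-- The configuration whose `j`-th segment is everything and is given to the thief `k`. -/
def vert (j : ℕ) (k : ZMod p) : Conf p d := fun i c => if (i : ℕ) = j ∧ c = k then 1 else 0

lemma act_vert (x : ZMod p) (j : ℕ) (k : ZMod p) :
    act x (vert j k : Conf p d) = vert j (x + k) := by
  funext i c
  simp only [act, vert, sub_eq_iff_eq_add, add_comm]

variable [NeZero p]

lemma convex_face (χ : Fin (d + 1) → ZMod p) : Convex ℝ (face χ) := by
  rintro v ⟨h1, h2, h3⟩ w ⟨g1, g2, g3⟩ a b ha hb hab
  refine ⟨fun j c => ?_, ?_, fun j c hc => ?_⟩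
  · have := h1 j c
    have := g1 j c
    simp only [Pi.add_apply, Pi.smul_apply, smul_eq_mul]
    positivity
  · simp only [Pi.add_apply, Pi.smul_apply, smul_eq_mul, Finset.sum_add_distrib,
      ← Finset.mul_sum, h2, g2, mul_one, hab]
  · simp [h3 j c hc, g3 j c hc]

lemma isCompact_face (χ : Fin (d + 1) → ZMod p) : IsCompact (face χ) := by
  have hsub : face χ ⊆ Set.Icc (0 : Conf p d) 1 := by
    rintro v ⟨h1, h2, -⟩
    refine ⟨fun j c => h1 j c, fun j c => ?_⟩
    calc v j c ≤ ∑ c, v j c := Finset.single_le_sum (fun c _ => h1 j c) (Finset.mem_univ c)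
      _ ≤ ∑ j, ∑ c, v j c := Finset.single_le_sum (f := fun j => ∑ c, v j c)
          (fun j _ => Finset.sum_nonneg fun c _ => h1 j c) (Finset.mem_univ j)
      _ = 1 := h2
  refine isCompact_Icc.of_isClosed_subset ?_ hsub
  have : face χ = (⋂ j, ⋂ c, {v : Conf p d | 0 ≤ v j c}) ∩ ({v | ∑ j, ∑ c, v j c = 1} ∩
      ⋂ j, ⋂ c, ⋂ (_ : c ≠ χ j), {v | v j c = 0}) := by
    ext v; simp [face]
  rw [this]
  refine (isClosed_iInter fun j => isClosed_iInter fun c => ?_).inter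
    (IsClosed.inter ?_ (isClosed_iInter fun j => isClosed_iInter fun c => isClosed_iInter
      fun _ => ?_))
  · exact isClosed_le continuous_const (by fun_prop)
  · exact isClosed_eq (by fun_prop) continuous_const
  · exact isClosed_eq (by fun_prop) continuous_const

lemma vert_mem_face (χ : Fin (d + 1) → ZMod p) (j : Fin (d + 1)) : vert j (χ j) ∈ face χ := by
  refine ⟨fun i c => ?_, ?_, fun i c hc => ?_⟩
  · unfold vert; split_ifs <;> simp
  · simp only [vert, Fin.val_inj, ite_and]
    simp
  · simp only [vert, Fin.val_inj]
    rw [if_neg]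
    rintro ⟨rfl, rfl⟩
    exact hc rfl

/-- The initial equivariant system: the chain of dimension `j + 1` is the cone over `A_j (h j)` with
apex in a fresh factor of the join. -/
noncomputable def baseSys (p d : ℕ) [NeZero p] : ℕ → Chain p (Conf p d)
  | 0 => Finsupp.single [vert 0 0] 1
  | j + 1 => cone (vert (j + 1) 0) (opA act j (baseSys p d j))

lemma baseSys_supp (j : ℕ) : baseSys p d j ∈ Finsupp.supported (ZMod p) (ZMod p)
    {l | l.length = j + 1 ∧ ∃ χ : ℕ → ZMod p, ∀ v ∈ l, ∃ i ≤ j, v = vert i (χ i)} := by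
  induction j with
  | zero =>
    exact Finsupp.single_mem_supported _ _ ⟨rfl, 0, fun v hv => ⟨0, le_rfl, by simpa using hv⟩⟩
  | succ j ih =>
    have hact : ∀ x : ZMod p, push (act x) (baseSys p d j) ∈ Finsupp.supported (ZMod p) (ZMod p)
        {l | l.length = j + 1 ∧ ∃ χ : ℕ → ZMod p, ∀ v ∈ l, ∃ i ≤ j, v = vert i (χ i)} := by
      intro x
      refine lin_mem (fun l hl => ?_) ih
      obtain ⟨hlen, χ, hχ⟩ := hl
      rw [push_single]
      refine Finsupp.single_mem_supported _ _ ⟨by simpa using hlen, fun i => x + χ i, ?_⟩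
      intro v hv
      obtain ⟨w, hw, rfl⟩ := List.mem_map.1 hv
      obtain ⟨i, hi, rfl⟩ := hχ w hw
      exact ⟨i, hi, act_vert _ _ _⟩
    have hop : opA act j (baseSys p d j) ∈ Finsupp.supported (ZMod p) (ZMod p)
        {l | l.length = j + 1 ∧ ∃ χ : ℕ → ZMod p, ∀ v ∈ l, ∃ i ≤ j, v = vert i (χ i)} := by
      unfold opA
      split_ifs
      · exact Submodule.sub_mem _ (hact 1) ih
      · rw [LinearMap.sum_apply]
        exact Submodule.sum_mem _ fun x _ => hact x
    rw [baseSys]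
    refine lin_mem (fun l hl => ?_) hop
    obtain ⟨hlen, χ, hχ⟩ := hl
    rw [cone_single]
    refine Finsupp.single_mem_supported _ _ ⟨by simpa using hlen,
      Function.update χ (j + 1) 0, ?_⟩
    intro v hv
    rcases List.mem_cons.1 hv with rfl | hv
    · exact ⟨j + 1, le_rfl, by simp⟩
    · obtain ⟨i, hi, rfl⟩ := hχ v hv
      exact ⟨i, by omega, by rw [Function.update_of_ne (by omega)]⟩

lemma bd_baseSys (j : ℕ) : bd (baseSys p d (j + 1)) = opA act j (baseSys p d j) := by
  induction j with
  | zero =>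
    have : bd (baseSys p d 0) = Finsupp.single [] 1 := by
      simp [baseSys, bdL]
    rw [show baseSys p d (0 + 1) = cone (vert (0 + 1) 0) (opA act 0 (baseSys p d 0)) from rfl,
      bd_cone, bd_opA, this, opA_empty]
    simp
  | succ j ih =>
    rw [show baseSys p d (j + 1 + 1) =
      cone (vert (j + 1 + 1) 0) (opA act (j + 1) (baseSys p d (j + 1))) from rfl,
      bd_cone, bd_opA, ih, opA_opA act act_act]
    simp

/-- The lists of points in one face, at mutual distance at most `D`. -/
def Small (D : ℝ) (l : List (Conf p d)) : Prop :=
  (∃ χ, ∀ v ∈ l, v ∈ face χ) ∧ ∀ v ∈ l, ∀ w ∈ l, dist v w ≤ D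

lemma isSys_baseSys : IsSys d (Small 1) act (baseSys p d) where
  zero := by simp [baseSys, bdL]
  succ j _ := bd_baseSys j
  supp := by
    intro j hj
    refine Finsupp.supported_mono ?_ (baseSys_supp j)
    rintro l ⟨hlen, χ, hχ⟩
    refine ⟨hlen, ⟨fun i => χ i, fun v hv => ?_⟩, fun v hv w hw => ?_⟩
    · obtain ⟨i, hi, rfl⟩ := hχ v hv
      exact vert_mem_face (fun i : Fin (d + 1) => χ i) ⟨i, by omega⟩
    · obtain ⟨i, hi, rfl⟩ := hχ v hv
      obtain ⟨i', hi', rfl⟩ := hχ w hw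
      rw [dist_pi_le_iff zero_le_one]
      intro a
      rw [dist_pi_le_iff zero_le_one]
      intro c
      simp only [vert]
      split_ifs <;> simp

lemma bary_act (x : ZMod p) (l : List (Conf p d)) :
    bary (l.map (act x)) = act x (bary l) := by
  have h : (l.map (act x)).sum = act x l.sum := by
    induction l with
    | nil => rfl
    | cons a l ih =>
      rw [List.map_cons, List.sum_cons, List.sum_cons, ih]
      rfl
  rw [bary, bary, h, List.length_map]
  rfl

/-- There are equivariant systems made of arbitrarily small simplices, each in one face: subdivide
`baseSys` often enough. -/
lemma exists_isSys (δ : ℝ) (hδ : 0 < δ) :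
    ∃ h : ℕ → Chain p (Conf p d), IsSys d (Small δ) act h := by
  have hpos : (0 : ℝ) < (d : ℝ) + 1 := by positivity
  have hq0 : 0 ≤ 1 - (((d + 1 : ℕ) : ℝ))⁻¹ := by
    rw [sub_nonneg]
    apply inv_le_one_of_one_le₀
    push_cast
    have : (0 : ℝ) ≤ d := by positivity
    linarith
  have hq1 : 1 - (((d + 1 : ℕ) : ℝ))⁻¹ < 1 := by
    have : (0 : ℝ) < (((d + 1 : ℕ) : ℝ))⁻¹ := by positivity
    linarith
  have iter : ∀ m : ℕ, ∃ h : ℕ → Chain p (Conf p d),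
      IsSys d (Small ((1 - (((d + 1 : ℕ) : ℝ))⁻¹) ^ m)) act h := by
    intro m
    induction m with
    | zero => exact ⟨_, by simpa using isSys_baseSys⟩
    | succ m ih =>
      obtain ⟨h, H⟩ := ih
      refine ⟨_, H.sd bary ?_ (fun x l _ _ => bary_act x l) ?_⟩
      · rintro l l' ⟨⟨χ, hχ⟩, hD⟩ hsub
        exact ⟨⟨χ, fun v hv => hχ v (hsub.subset hv)⟩,
          fun v hv w hw => hD v (hsub.subset hv) w (hsub.subset hw)⟩
      · rintro n hn l hl ⟨⟨χ, hχ⟩, hD⟩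
        refine Finsupp.supported_mono ?_
          (sd_bary (p := p) (d + 1) _ (pow_nonneg hq0 m) (n + 1) (by omega) l hl hD)
        rintro q ⟨h1, h2, h3⟩
        refine ⟨h1, ⟨χ, fun v hv => ?_⟩, ?_⟩
        · exact convexHull_min (fun w hw => hχ w hw) (convex_face χ) (h2 v hv)
        · rw [pow_succ']
          exact h3
  obtain ⟨m, hm⟩ := exists_pow_lt_of_lt_one hδ hq1
  obtain ⟨h, H⟩ := iter m
  refine ⟨h, H.zero, H.succ, fun j hj => Finsupp.supported_mono ?_ (H.supp j hj)⟩
  rintro l ⟨h1, h2, h3⟩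
  exact ⟨h1, h2, fun v hv w hw => (h3 v hv w hw).trans hm.le⟩

end Config

/-! ### Balanced configurations -/

section Topological

variable {p n : ℕ} [Fact p.Prime]

/-- Some configuration gives every thief at most `1/p + ε` of each measure. Otherwise, label a small
simplex `l` by the set `Λ l` of pairs `(i, k)` such that at some vertex of `l` the thief `k` gets
more than `1/p + ε` of the measure `i`. These sets are nonempty and contain no full row, as all
vertices of `l` are close together and the shares add up to one; in particular they have at most
`n * (p - 1)` elements. Hence the phases of `exists_phase` turn a fine equivariant system into one
on `ZMod p` whose chain of top dimension `n * (p - 1)` consists of degenerate lists, by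
`sd_degenerate`. This contradicts `IsSys.count`. -/
lemma exists_approx (f : Conf p (n * (p - 1)) → Fin n → ZMod p → ℝ) (hf : Continuous f)
    (hact : ∀ x v i k, f (act x v) i k = f v i (k - x))
    (hsum : ∀ χ, ∀ v ∈ face χ, ∀ i, ∑ k, f v i k = 1) (ε : ℝ) (hε : 0 < ε) :
    ∃ χ, ∃ v ∈ face χ, ∀ i k, f v i k ≤ 1 / p + ε := by
  classical
  by_contra! hcon
  have hK : IsCompact (⋃ χ, face χ : Set (Conf p (n * (p - 1)))) :=
    isCompact_iUnion isCompact_face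
  obtain ⟨δ, hδ, hδf⟩ := Metric.uniformContinuousOn_iff.1
    (hK.uniformContinuousOn_of_continuous hf.continuousOn) ε hε
  obtain ⟨h, H⟩ := exists_isSys (p := p) (d := n * (p - 1)) (δ / 2) (half_pos hδ)
  let Λ : List (Conf p (n * (p - 1))) → Finset (Fin n × ZMod p) := fun l =>
    Finset.univ.filter fun ik => ∃ v ∈ l, 1 / p + ε < f v ik.1 ik.2
  have hmono : ∀ l l', l'.Sublist l → Λ l' ⊆ Λ l := by
    intro l l' hsub ik
    simp only [Λ, Finset.mem_filter, Finset.mem_univ, true_and]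
    rintro ⟨v, hv, h⟩
    exact ⟨v, hsub.subset hv, h⟩
  have hne : ∀ l, Small (δ / 2) l → l ≠ [] → (Λ l).Nonempty := by
    rintro l ⟨⟨χ, hχ⟩, -⟩ hl
    obtain ⟨v, hv⟩ := List.exists_mem_of_ne_nil l hl
    obtain ⟨i, k, hik⟩ := hcon χ v (hχ v hv)
    exact ⟨(i, k), by simpa [Λ] using ⟨v, hv, by simpa using hik⟩⟩
  have hsub : ∀ l l' : List (Conf p (n * (p - 1))), Small (δ / 2) l → l'.Sublist l →
      Small (δ / 2) l' := by
    rintro l l' ⟨⟨χ, hχ⟩, hD⟩ hsub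
    exact ⟨⟨χ, fun v hv => hχ v (hsub.subset hv)⟩,
      fun v hv w hw => hD v (hsub.subset hv) w (hsub.subset hw)⟩
  have hadm : ∀ l, Small (δ / 2) l → l ≠ [] → ∀ i, ∃ k, (i, k) ∉ Λ l := by
    rintro l ⟨⟨χ, hχ⟩, hD⟩ hl i
    by_contra! hall
    obtain ⟨v, hv⟩ := List.exists_mem_of_ne_nil l hl
    have h1 : ∀ k, 1 / (p : ℝ) < f v i k := by
      intro k
      have h2 := hall k
      simp only [Λ, Finset.mem_filter, Finset.mem_univ, true_and] at h2
      obtain ⟨w, hw, hlt⟩ := h2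
      have h3 := hδf v (Set.mem_iUnion.2 ⟨χ, hχ v hv⟩) w (Set.mem_iUnion.2 ⟨χ, hχ w hw⟩)
        ((hD v hv w hw).trans_lt (half_lt_self hδ))
      have h4 : dist (f v i k) (f w i k) < ε :=
        ((dist_le_pi_dist (f v i) (f w i) k).trans (dist_le_pi_dist (f v) (f w) i)).trans_lt h3
      rw [Real.dist_eq, abs_lt] at h4
      linarith [h4.1]
    have h5 : ∑ _k : ZMod p, 1 / (p : ℝ) < ∑ k, f v i k :=
      Finset.sum_lt_sum_of_nonempty Finset.univ_nonempty fun k _ => h1 k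
    rw [hsum χ v (hχ v hv) i, Finset.sum_const, Finset.card_univ, ZMod.card, nsmul_eq_mul,
      mul_one_div_cancel (by exact_mod_cast (Fact.out : p.Prime).ne_zero)] at h5
    exact lt_irrefl _ h5
  have hcard : ∀ l, Small (δ / 2) l → l ≠ [] → (Λ l).card ≤ n * (p - 1) := by
    intro l hl hl'
    choose κ hκ using hadm l hl hl'
    have h1 : Λ l ⊆ Finset.univ \ Finset.univ.image fun i => (i, κ i) := by
      intro ik hik
      simp only [Finset.mem_sdiff, Finset.mem_univ, true_and, Finset.mem_image, not_exists]
      rintro i rfl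
      exact hκ i hik
    have h2 := Finset.card_le_card h1
    rw [Finset.card_sdiff_of_subset (Finset.subset_univ _), Finset.card_image_of_injective _
      (fun i j hij => (Prod.mk.inj hij).1)] at h2
    simpa [ZMod.card, Nat.mul_sub_one] using h2
  obtain ⟨φ, hφ⟩ := exists_phase (p := p) n
  have hΛ : ∀ x l, Λ (l.map (act x)) = (Λ l).image fun ik => (ik.1, x + ik.2) := by
    intro x l
    ext ⟨i, k⟩
    simp only [Λ, Finset.mem_filter, Finset.mem_univ, true_and, List.mem_map,
      Finset.mem_image, Prod.mk.injEq, Prod.exists]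
    constructor
    · rintro ⟨_, ⟨v, hv, rfl⟩, h⟩
      rw [hact] at h
      exact ⟨i, k - x, ⟨v, hv, h⟩, rfl, by ring⟩
    · rintro ⟨i, k, ⟨v, hv, h⟩, rfl, rfl⟩
      exact ⟨_, ⟨v, hv, rfl⟩, by rw [hact]; simpa using h⟩
  have H' : IsSys (n * (p - 1)) (fun _ => True) (fun x k => x + k)
      (fun j => sd (fun l => φ (Λ l)) (j + 1) (h j)) := by
    refine H.sd _ hsub (fun x l hl hl' => ?_) ?_
    · rw [hΛ]
      exact hφ _ (hne l hl' hl) (hadm l hl' hl) x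
    · intro m _ l hl _
      have key : ∀ (m : ℕ) (l : List (Conf p (n * (p - 1)))), l.length = m →
          sd (fun l => φ (Λ l)) m (Finsupp.single l (1 : ZMod p)) ∈
          Finsupp.supported (ZMod p) (ZMod p) {q | q.length = m} := by
        intro m
        induction m with
        | zero =>
          intro l _
          rw [sd_zero_single]
          exact Finsupp.single_mem_supported _ _ rfl
        | succ m ih =>
          intro l hl
          rw [sd_succ_single, ← LinearMap.comp_apply]
          refine lin_mem (fun l' hl' => ?_) (bdL_mem l)
          rw [LinearMap.comp_apply]
          refine lin_mem (fun q hq => ?_) (ih l' (by have := hl'.2; omega))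
          rw [cone_single]
          exact Finsupp.single_mem_supported _ _ (by simpa using hq)
      simpa using key (m + 1) l hl
  have hone := H'.count (n * (p - 1)) le_rfl
  have hdeg : sd (fun l => φ (Λ l)) (n * (p - 1) + 1) (h (n * (p - 1))) ∈
      Finsupp.supported (ZMod p) (ZMod p) {q | ¬ q.IsChain (· ≠ ·)} := by
    refine lin_mem (fun l hl => ?_) (H.supp _ le_rfl)
    have hl' : l ≠ [] := by
      rintro rfl
      simpa using hl.1
    exact sd_degenerate Λ φ hmono _ l hl.1 (fun l' h1 h2 => hne l' (hsub l l' hl.2 h1) h2)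
      (Nat.lt_succ_of_le (hcard l hl.2 hl'))
  rw [Finset.sum_eq_zero] at hone
  · exact zero_ne_one hone
  · intro x _
    refine (lin_eq (f := alc ∘ₗ push fun k => x + k) (g := 0) (fun q hq => ?_) hdeg :)
    simp only [LinearMap.comp_apply, push_single, alc_single, LinearMap.zero_apply]
    refine al_degenerate _ fun hc => hq ?_
    rw [List.isChain_map] at hc
    exact hc.imp fun a b hab => by simpa using hab

/-- An equivariant continuous family of shares, adding up to one for each measure, is balanced at
some configuration with `n * (p - 1)` cuts. -/
theorem exists_balanced (f : Conf p (n * (p - 1)) → Fin n → ZMod p → ℝ) (hf : Continuous f)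
    (hact : ∀ x v i k, f (act x v) i k = f v i (k - x))
    (hsum : ∀ χ, ∀ v ∈ face χ, ∀ i, ∑ k, f v i k = 1) :
    ∃ χ, ∃ v ∈ face χ, ∀ i k, f v i k = 1 / p := by
  have hK : IsCompact (⋃ χ, face χ : Set (Conf p (n * (p - 1)))) :=
    isCompact_iUnion isCompact_face
  let C : ℕ → Set (Conf p (n * (p - 1))) := fun m =>
    (⋃ χ, face χ) ∩ ⋂ i, ⋂ k, {v | f v i k ≤ 1 / p + 1 / ((m : ℝ) + 1)}
  have hcl : ∀ m : ℕ, IsClosed (⋂ i, ⋂ k, {v | f v i k ≤ 1 / p + 1 / ((m : ℝ) + 1)}) :=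
    fun m => isClosed_iInter fun i => isClosed_iInter fun k =>
      isClosed_le (by fun_prop) continuous_const
  have hCne : (⋂ m, C m).Nonempty := by
    refine IsCompact.nonempty_iInter_of_sequence_nonempty_isCompact_isClosed C ?_ ?_ ?_ ?_
    · intro m v hv
      refine ⟨hv.1, ?_⟩
      simp only [Set.mem_iInter]
      intro i k
      have h1 := hv.2
      simp only [Set.mem_iInter, Set.mem_ofPred_eq] at h1
      refine (h1 i k).trans ?_
      have : 1 / (((m + 1 : ℕ) : ℝ) + 1) ≤ 1 / ((m : ℝ) + 1) :=
        one_div_le_one_div_of_le (by positivity) (by push_cast; linarith)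
      linarith
    · intro m
      obtain ⟨χ, v, hv, h⟩ := exists_approx f hf hact hsum (1 / ((m : ℝ) + 1)) (by positivity)
      exact ⟨v, Set.mem_iUnion.2 ⟨χ, hv⟩, by simpa using h⟩
    · exact hK.inter_right (hcl 0)
    · exact fun m => hK.isClosed.inter (hcl m)
  obtain ⟨v, hv⟩ := hCne
  rw [Set.mem_iInter] at hv
  obtain ⟨χ, hχ⟩ := Set.mem_iUnion.1 (hv 0).1
  refine ⟨χ, v, hχ, ?_⟩
  have hle : ∀ i k, f v i k ≤ 1 / p := by
    intro i k
    have h1 : ∀ m : ℕ, f v i k - 1 / p ≤ 1 / ((m : ℝ) + 1) := by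
      intro m
      have := (hv m).2
      simp only [Set.mem_iInter, Set.mem_ofPred_eq] at this
      linarith [this i k]
    have h2 := ge_of_tendsto' tendsto_one_div_add_atTop_nhds_zero_nat h1
    linarith
  intro i k
  by_contra hne
  have h5 : ∑ k, f v i k < ∑ _k : ZMod p, 1 / (p : ℝ) :=
    Finset.sum_lt_sum (fun k _ => hle i k) ⟨k, Finset.mem_univ k, lt_of_le_of_ne (hle i k) hne⟩
  rw [hsum χ v hχ i, Finset.sum_const, Finset.card_univ, ZMod.card, nsmul_eq_mul,
    mul_one_div_cancel (by exact_mod_cast (Fact.out : p.Prime).ne_zero)] at h5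
  exact lt_irrefl _ h5

end Topological

/-! ### Splittings of measures -/

section Measures

/-- Any `n` atomless probability measures on `[0,1]` admit a fair splitting among the thieves `κ`
with at most `n * (|κ| - 1)` cuts. The splitting is encoded by a finite set `S` of cuts and a
colouring `c` of the real line that is constant on closed intervals free of cuts. -/
def SplitsBy (κ : Type) [Fintype κ] : Prop :=
  ∀ (n : ℕ) (μs : Fin n → Measure ℝ), (∀ i, IsProbabilityMeasure (μs i)) →
    (∀ i, NullSingletonClass (μs i)) → (∀ i, μs i (Set.Icc (0 : ℝ) 1)ᶜ = 0) →
    ∃ (S : Finset ℝ) (c : ℝ → κ), S.card ≤ n * (Fintype.card κ - 1) ∧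
      (∀ k, MeasurableSet (c ⁻¹' {k})) ∧
      (∀ x y, x < y → (∀ s ∈ S, ¬ (x ≤ s ∧ s ≤ y)) → c x = c y) ∧
      ∀ i k, μs i (c ⁻¹' {k}) = 1 / (Fintype.card κ : ENNReal)

lemma SplitsBy.equiv {κ κ' : Type} [Fintype κ] [Fintype κ'] (e : κ ≃ κ') (h : SplitsBy κ) :
    SplitsBy κ' := by
  intro n μs h1 h2 h3
  obtain ⟨S, c, hS, hm, hc, hμ⟩ := h n μs h1 h2 h3
  have hpre : ∀ k, (e ∘ c) ⁻¹' {k} = c ⁻¹' {e.symm k} := by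
    intro k
    ext x
    simp [Equiv.eq_symm_apply]
  rw [Fintype.card_congr e] at hS hμ
  refine ⟨S, e ∘ c, hS, fun k => ?_, fun x y hxy hs => ?_, fun i k => ?_⟩
  · rw [hpre]; exact hm _
  · simp [hc x y hxy hs]
  · rw [hpre]; exact hμ _ _

lemma splitsBy_one : SplitsBy (Fin 1) := by
  intro n μs h1 h2 h3
  refine ⟨∅, fun _ => 0, by simp, fun k => ?_, fun _ _ _ _ => rfl, fun i k => ?_⟩
  · exact MeasurableSet.const _
  · have : (fun _ : ℝ => (0 : Fin 1)) ⁻¹' {k} = Set.univ := by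
      ext x; simp [Subsingleton.elim k 0]
    rw [this]
    have := h1 i
    simp

/-- Split among the thieves `κ`, then split each part, renormalised, among `κ'`. The cuts add up:
with `a = |κ|` and `b = |κ'|`, `n(a-1) + a·n(b-1) = n(ab-1)`. -/
lemma SplitsBy.prod {κ κ' : Type} [Fintype κ] [Fintype κ'] [Nonempty κ] [Nonempty κ']
    (h : SplitsBy κ) (h' : SplitsBy κ') : SplitsBy (κ × κ') := by
  classical
  intro n μs h1 h2 h3
  obtain ⟨S, c, hS, hm, hc, hμ⟩ := h n μs h1 h2 h3
  have ha : 0 < Fintype.card κ := Fintype.card_pos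
  have hb : 0 < Fintype.card κ' := Fintype.card_pos
  have ha0 : (Fintype.card κ : ENNReal) ≠ 0 := by exact_mod_cast ha.ne'
  have ha1 : (Fintype.card κ : ENNReal) ≠ ⊤ := ENNReal.natCast_ne_top _
  have step := fun k : κ => h' n
    (fun i => (Fintype.card κ : ENNReal) • (μs i).restrict (c ⁻¹' {k}))
    (fun i => ⟨by
      rw [Measure.smul_apply, Measure.restrict_apply_univ, hμ, smul_eq_mul,
        ENNReal.mul_div_cancel ha0 ha1]⟩)
    (fun i => by
      have := h2 i
      exact ⟨fun x => by simp⟩)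
    (fun i => by
      rw [Measure.smul_apply, smul_eq_mul, mul_eq_zero]
      right
      exact Measure.restrict_le_self.absolutelyContinuous (h3 i))
  choose S' c' hS' hm' hc' hμ' using step
  have hpre : ∀ k l, (fun x => (c x, c' (c x) x)) ⁻¹' {(k, l)} =
      c' k ⁻¹' {l} ∩ c ⁻¹' {k} := by
    intro k l
    ext x
    simp only [Set.mem_preimage, Set.mem_singleton_iff, Prod.mk.injEq, Set.mem_inter_iff]
    constructor
    · rintro ⟨rfl, h⟩; exact ⟨h, rfl⟩
    · rintro ⟨h, rfl⟩; exact ⟨rfl, h⟩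
  refine ⟨S ∪ Finset.univ.biUnion S', fun x => (c x, c' (c x) x), ?_, ?_, ?_, ?_⟩
  · have e1 : (Finset.univ.biUnion S').card ≤ Fintype.card κ * (n * (Fintype.card κ' - 1)) :=
      Finset.card_biUnion_le_card_mul _ _ _ fun k _ => hS' k
    refine (Finset.card_union_le _ _).trans ((add_le_add hS e1).trans ?_)
    rw [Fintype.card_prod]
    obtain ⟨a, ha⟩ : ∃ a, Fintype.card κ = a + 1 := ⟨_, (Nat.sub_add_cancel ha).symm⟩
    obtain ⟨b, hb⟩ : ∃ b, Fintype.card κ' = b + 1 := ⟨_, (Nat.sub_add_cancel hb).symm⟩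
    rw [ha, hb]
    have : (a + 1) * (b + 1) - 1 = a + (a + 1) * b := by
      rw [mul_add, mul_one]; omega
    rw [this]
    simp only [Nat.add_sub_cancel]
    apply le_of_eq; ring
  · rintro ⟨k, l⟩
    rw [hpre]
    exact (hm' k l).inter (hm k)
  · intro x y hxy hs
    have e1 := hc x y hxy fun s hs' => hs s (Finset.mem_union_left _ hs')
    have e2 := hc' (c y) x y hxy fun s hs' => hs s (Finset.mem_union_right _
      (Finset.mem_biUnion.2 ⟨_, Finset.mem_univ _, hs'⟩))
    simp only [e1, e2]
  · rintro i ⟨k, l⟩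
    rw [hpre]
    have e := hμ' k i l
    rw [Measure.smul_apply, Measure.restrict_apply (hm' k l), smul_eq_mul] at e
    rw [Fintype.card_prod, Nat.cast_mul, ENNReal.eq_div_iff
      (mul_ne_zero ha0 (by exact_mod_cast hb.ne'))
      (ENNReal.mul_ne_top ha1 (ENNReal.natCast_ne_top _))]
    rw [ENNReal.eq_div_iff (by exact_mod_cast hb.ne') (ENNReal.natCast_ne_top _)] at e
    rw [← e]
    ring

/-! ### A prime number of thieves -/

section Prime

variable {p d : ℕ} [Fact p.Prime]

/-- The left end of the `m`-th segment of the configuration, that is, the total length of the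
segments before it. -/
noncomputable def cut (v : Conf p d) (m : ℕ) : ℝ :=
  ∑ j : Fin (d + 1), if (j : ℕ) < m then ∑ c, v j c else 0

lemma cut_zero (v : Conf p d) : cut v 0 = 0 := by simp [cut]

lemma cut_succ (v : Conf p d) (j : Fin (d + 1)) :
    cut v (j + 1) = cut v j + ∑ c, v j c := by
  have : ∀ i : Fin (d + 1), (if (i : ℕ) < j + 1 then ∑ c, v i c else 0) =
      (if (i : ℕ) < j then ∑ c, v i c else 0) + if i = j then ∑ c, v i c else 0 := by
    intro i
    rcases lt_trichotomy (i : ℕ) j with h | h | h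
    · have h' : i ≠ j := by rintro rfl; omega
      simp [h, h', h.trans (Nat.lt_succ_self _)]
    · obtain rfl : i = j := Fin.ext h
      simp
    · have h' : i ≠ j := by rintro rfl; omega
      rw [if_neg (by omega), if_neg (by omega), if_neg h', add_zero]
  unfold cut
  rw [Finset.sum_congr rfl fun i _ => this i, Finset.sum_add_distrib]
  simp

lemma cut_last (v : Conf p d) : cut v (d + 1) = ∑ j, ∑ c, v j c := by
  unfold cut
  exact Finset.sum_congr rfl fun j _ => if_pos j.2

lemma cut_act (x : ZMod p) (v : Conf p d) (m : ℕ) : cut (act x v) m = cut v m := by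
  unfold cut
  refine Finset.sum_congr rfl fun j _ => ?_
  congr 1
  exact Fintype.sum_equiv (Equiv.subRight x) _ _ fun c => rfl

lemma cut_mono {χ : Fin (d + 1) → ZMod p} {v : Conf p d} (hv : v ∈ face χ) :
    Monotone (cut v) := by
  intro m m' hm
  refine Finset.sum_le_sum fun j _ => ?_
  have : 0 ≤ ∑ c, v j c := Finset.sum_nonneg fun c _ => hv.1 j c
  split_ifs with h1 h2 h2
  · rfl
  · omega
  · exact this
  · rfl

lemma continuous_cut (m : ℕ) : Continuous fun v : Conf p d => cut v m := by
  unfold cut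
  refine continuous_finsetSum _ fun j _ => ?_
  split_ifs <;> fun_prop

/-- The distribution function of a measure, measured from `0`. -/
noncomputable def distFun (μ : Measure ℝ) (t : ℝ) : ℝ := ∫ _x in (0 : ℝ)..t, (1 : ℝ) ∂μ

lemma distFun_sub (μ : Measure ℝ) [IsFiniteMeasure μ] {s t : ℝ} (h : s ≤ t) :
    distFun μ t - distFun μ s = μ.real (Set.Ioc s t) := by
  unfold distFun
  rw [intervalIntegral.integral_interval_sub_left intervalIntegrable_const
    intervalIntegrable_const, intervalIntegral.integral_of_le h]
  simp

/-- The share of the thief `k` in the `i`-th measure. On a face, only the segments of the thief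
contribute; the formula makes sense on the whole vector space and is continuous there. -/
noncomputable def share {n : ℕ} (μs : Fin n → Measure ℝ) (v : Conf p d) (i : Fin n)
    (k : ZMod p) : ℝ :=
  ∑ j : Fin (d + 1), (distFun (μs i) (cut v j + v j k) - distFun (μs i) (cut v j))

lemma share_face {n : ℕ} (μs : Fin n → Measure ℝ) {χ : Fin (d + 1) → ZMod p} {v : Conf p d}
    (hv : v ∈ face χ) (i : Fin n) (k : ZMod p) :
    share μs v i k = ∑ j : Fin (d + 1),
      if χ j = k then distFun (μs i) (cut v (j + 1)) - distFun (μs i) (cut v j) else 0 := by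
  refine Finset.sum_congr rfl fun j _ => ?_
  have hs : ∑ c, v j c = v j (χ j) :=
    Finset.sum_eq_single _ (fun c _ hc => hv.2.2 j c hc) (by simp)
  split_ifs with h
  · rw [cut_succ, hs, h]
  · rw [hv.2.2 j k (Ne.symm h)]
    simp

/-- A balanced configuration of `exists_balanced`, turned into a colouring: a point is coloured
according to the number of cuts to its left. -/
lemma splitsBy_prime : SplitsBy (ZMod p) := by
  classical
  intro n μs h1 h2 h3
  have hp : (p : ℝ) ≠ 0 := by exact_mod_cast (Fact.out : p.Prime).ne_zero
  have hfull : ∀ i, (μs i).real (Set.Ioc 0 1) = 1 := by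
    intro i
    have := h1 i
    have := h2 i
    rw [measureReal_congr Ioc_ae_eq_Icc, measureReal_def,
      (prob_compl_eq_zero_iff measurableSet_Icc).1 (h3 i)]
    simp
  have hex := exists_balanced (p := p) (n := n) (fun v i k => share μs v i k)
    (by
      refine continuous_pi fun i => continuous_pi fun k => ?_
      have := h1 i
      have := h2 i
      have hF : Continuous (distFun (μs i)) :=
        intervalIntegral.continuous_primitive (fun a b => intervalIntegrable_const) 0
      unfold share
      refine continuous_finsetSum _ fun j _ => ?_
      refine (hF.comp ((continuous_cut j).add ?_)).sub (hF.comp (continuous_cut j))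
      fun_prop)
    (by
      intro x v i k
      unfold share
      simp only [cut_act]
      rfl)
    (by
      intro χ v hv i
      have := h1 i
      simp only [share_face μs hv]
      rw [Finset.sum_comm]
      simp only [Finset.sum_ite_eq, Finset.mem_univ, if_true]
      rw [Fin.sum_univ_eq_sum_range
        (fun j => distFun (μs i) (cut v (j + 1)) - distFun (μs i) (cut v j)),
        Finset.sum_range_sub (fun j => distFun (μs i) (cut v j)), cut_last, hv.2.1, cut_zero,
        distFun_sub _ zero_le_one, hfull])
  generalize hd : n * (p - 1) = d at hex
  obtain ⟨χ, v, hv, hbal⟩ := hex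
  have hT := cut_mono hv
  let cnt : ℝ → ℕ := fun x => ((Finset.Icc 1 d).filter fun m => cut v m < x).card
  let χ' : ℕ → ZMod p := fun m => if h : m < d + 1 then χ ⟨m, h⟩ else 0
  have hcnt : ∀ j ≤ d, ∀ x ∈ Set.Ioc (cut v j) (cut v (j + 1)), cnt x = j := by
    rintro j hj x ⟨hx1, hx2⟩
    have : ((Finset.Icc 1 d).filter fun m => cut v m < x) = Finset.Icc 1 j := by
      ext m
      simp only [Finset.mem_filter, Finset.mem_Icc]
      constructor
      · rintro ⟨⟨h1, h2⟩, h3⟩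
        refine ⟨h1, ?_⟩
        by_contra! hlt
        exact absurd (hx2.trans (hT (show j + 1 ≤ m by omega))) (not_le.2 h3)
      · rintro ⟨h1, h2⟩
        exact ⟨⟨h1, by omega⟩, (hT h2).trans_lt hx1⟩
    simp only [cnt, this]
    simp
  have hmeas : ∀ k, MeasurableSet ((fun x => χ' (cnt x)) ⁻¹' {k}) := by
    intro k
    have hm : Measurable cnt := by
      have : cnt = fun x => ∑ m ∈ Finset.Icc 1 d, if cut v m < x then 1 else 0 := by
        funext x
        simp only [cnt, Finset.card_filter]
      rw [this]
      refine Finset.measurable_sum _ fun m _ => ?_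
      exact Measurable.ite measurableSet_Ioi measurable_const measurable_const
    exact hm (MeasurableSet.of_discrete (s := χ' ⁻¹' {k}))
  refine ⟨(Finset.Icc 1 d).image (cut v), fun x => χ' (cnt x), ?_, hmeas, ?_, ?_⟩
  · refine Finset.card_image_le.trans ?_
    simp [ZMod.card, hd]
  · intro x y hxy hs
    have : cnt x = cnt y := by
      simp only [cnt]
      congr 1
      refine Finset.filter_congr fun m hm => ⟨fun h => h.trans hxy, fun h => ?_⟩
      by_contra! hle
      exact hs _ (Finset.mem_image_of_mem _ hm) ⟨hle, h.le⟩
    simp only [this]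
  · intro i k
    have := h1 i
    have := h2 i
    set A : Set ℝ := (fun x => χ' (cnt x)) ⁻¹' {k} with hA
    -- Add up the segments from left to right.
    have key : ∀ m ≤ d + 1, (μs i).real (A ∩ Set.Ioc 0 (cut v m)) =
        ∑ j ∈ Finset.range m,
          if χ' j = k then distFun (μs i) (cut v (j + 1)) - distFun (μs i) (cut v j) else 0 := by
      intro m
      induction m with
      | zero => simp [cut_zero]
      | succ m ih =>
        intro hm
        have h0 : 0 ≤ cut v m := by rw [← cut_zero v]; exact hT (Nat.zero_le _)
        have hsplit : A ∩ Set.Ioc 0 (cut v (m + 1)) =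
            (A ∩ Set.Ioc 0 (cut v m)) ∪ (A ∩ Set.Ioc (cut v m) (cut v (m + 1))) := by
          rw [← Set.inter_union_distrib_left, Set.Ioc_union_Ioc_eq_Ioc h0 (hT (Nat.le_succ m))]
        rw [hsplit, measureReal_union, Finset.sum_range_succ, ih (by omega)]
        · congr 1
          split_ifs with hk
          · rw [distFun_sub _ (hT (Nat.le_succ m))]
            congr 1
            refine Set.inter_eq_right.2 fun x hx => ?_
            simp [hA, hcnt m (by omega) x hx, hk]
          · have : A ∩ Set.Ioc (cut v m) (cut v (m + 1)) = ∅ := by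
              refine Set.eq_empty_of_forall_notMem fun x hx => hk ?_
              have := hx.1
              simpa [hA, hcnt m (by omega) x hx.2] using this
            simp [this]
        · refine (Set.Ioc_disjoint_Ioc_of_le le_rfl).mono Set.inter_subset_right
            Set.inter_subset_right
        · exact (hmeas k).inter measurableSet_Ioc
    have hfin := key (d + 1) le_rfl
    rw [cut_last, hv.2.1, ← Fin.sum_univ_eq_sum_range
      (fun j => if χ' j = k then distFun (μs i) (cut v (j + 1)) - distFun (μs i) (cut v j) else 0)]
      at hfin
    have hfin2 : (μs i).real (A ∩ Set.Ioc 0 1) = 1 / p := by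
      rw [hfin, ← hbal i k, share_face μs hv]
      refine Finset.sum_congr rfl fun j _ => ?_
      have : χ' (j : ℕ) = χ j := dif_pos j.2
      rw [this]
    have hnull : (μs i) (A ∩ Set.Ioc 0 1) = μs i A := by
      refine measure_inter_conull' ?_
      refine measure_mono_null (Set.sdiff_subset_compl _ _) ?_
      rw [prob_compl_eq_zero_iff measurableSet_Ioc]
      rw [← ENNReal.toReal_eq_one_iff]
      exact hfull i
    rw [ZMod.card]
    rw [measureReal_def, hnull] at hfin2
    rw [← ENNReal.ofReal_toReal (measure_ne_top (μs i) A), hfin2,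
      ENNReal.ofReal_div_of_pos (by positivity)]
    simp

end Prime

lemma splitsBy_fin (r : ℕ) (hr : r ≠ 0) : SplitsBy (Fin r) := by
  induction r using induction_on_primes with
  | zero => exact absurd rfl hr
  | one => exact splitsBy_one
  | prime_mul p a hp ih =>
    have : Fact p.Prime := ⟨hp⟩
    have ha : a ≠ 0 := by rintro rfl; simp at hr
    have : NeZero a := ⟨ha⟩
    exact ((splitsBy_prime (p := p)).prod (ih ha)).equiv
      (((ZMod.finEquiv p).symm.toEquiv.prodCongr (Equiv.refl _)).trans finProdFinEquiv)

end Measures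

end Necklace

/-! ### The splitting theorem -/

/-- The continuous splitting necklace theorem of Alon: `n` absolutely continuous probability
measures on `[0,1]` can be split fairly among `r` thieves using `N = n(r-1)+1` consecutive
segments. -/
theorem stmt_13 (n : ℕ) (μs : Fin n → Measure ℝ)
    (hprob : ∀ i, IsProbabilityMeasure (μs i))
    (hsupp : ∀ i, μs i (Set.Icc (0 : ℝ) 1)ᶜ = 0)
    (hac : ∀ i, μs i ≪ volume)
    (r : ℕ) (hr : 2 ≤ r) :
    ∃ t : Fin (n * (r - 1) + 1 + 1) → ℝ, ∃ χ : Fin (n * (r - 1) + 1) → Fin r,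
      Monotone t ∧ t 0 = 0 ∧ t (Fin.last _) = 1 ∧
      ∀ (i : Fin n) (k : Fin r),
        μs i (⋃ j, ⋃ (_ : χ j = k), Set.Icc (t j.castSucc) (t j.succ)) = 1 / r := by
  classical
  have hna : ∀ i, NullSingletonClass (μs i) := fun i => ⟨fun x => hac i (by simp)⟩
  obtain ⟨S, c, hS, -, hc, hμ⟩ := Necklace.splitsBy_fin r (by omega) n μs hprob hna hsupp
  rw [Fintype.card_fin] at hS hμ
  -- Cuts outside `(0, 1)` are dropped and superfluous ones added, so that there are exactly
  -- `n * (r - 1)` of them.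
  obtain ⟨T, hTsub, hT01, hTcard⟩ : ∃ T : Finset ℝ, S.filter (· ∈ Set.Ioo (0 : ℝ) 1) ⊆ T ∧
      (T : Set ℝ) ⊆ Set.Ioo (0 : ℝ) 1 ∧ T.card = n * (r - 1) := by
    obtain ⟨B, hB, hBcard⟩ :=
      (Set.Ioo_infinite (zero_lt_one (α := ℝ))).exists_subset_card_eq (n * (r - 1))
    obtain ⟨T, hT1, hT2, hT3⟩ := Finset.exists_subsuperset_card_eq
      (s := S.filter (· ∈ Set.Ioo (0 : ℝ) 1)) (t := S.filter (· ∈ Set.Ioo (0 : ℝ) 1) ∪ B)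
      Finset.subset_union_left ((Finset.card_filter_le _ _).trans hS)
      (hBcard.symm.le.trans (Finset.card_le_card Finset.subset_union_right))
    refine ⟨T, hT1, fun x hx => ?_, hT3⟩
    rcases Finset.mem_union.1 (hT2 hx) with h | h
    · exact (Finset.mem_filter.1 h).2
    · exact hB h
  have h0T : (0 : ℝ) ∉ insert 1 T := by
    intro h
    rcases Finset.mem_insert.1 h with h | h
    · exact zero_ne_one h
    · exact lt_irrefl _ (hT01 h).1
  have h1T : (1 : ℝ) ∉ T := fun h => lt_irrefl _ (hT01 h).2
  have hcard : (insert 0 (insert 1 T)).card = n * (r - 1) + 1 + 1 := by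
    rw [Finset.card_insert_of_notMem h0T, Finset.card_insert_of_notMem h1T, hTcard]
  set t := (insert 0 (insert 1 T)).orderEmbOfFin hcard with ht
  have hrange : ∀ x, x ∈ insert 0 (insert 1 T) → ∃ a, t a = x := by
    intro x hx
    have := Finset.range_orderEmbOfFin (insert 0 (insert 1 T)) hcard
    have hx' : x ∈ Set.range t := by rw [ht, this]; exact hx
    exact hx'
  have hmem : ∀ a, 0 ≤ t a ∧ t a ≤ 1 := by
    intro a
    have := Finset.orderEmbOfFin_mem (insert 0 (insert 1 T)) hcard a
    rw [← ht] at this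
    rcases Finset.mem_insert.1 this with h | h
    · rw [h]; simp
    rcases Finset.mem_insert.1 h with h | h
    · rw [h]; simp
    · exact ⟨(hT01 h).1.le, (hT01 h).2.le⟩
  have ht0 : t 0 = 0 := by
    obtain ⟨a, ha⟩ := hrange 0 (by simp)
    exact le_antisymm (ha ▸ t.monotone (Fin.zero_le a)) (hmem 0).1
  have ht1 : t (Fin.last _) = 1 := by
    obtain ⟨a, ha⟩ := hrange 1 (by simp)
    exact le_antisymm (hmem _).2 (ha ▸ t.monotone (Fin.le_last a))
  refine ⟨t, fun j => c ((t j.castSucc + t j.succ) / 2), t.monotone, ht0, ht1, fun i k => ?_⟩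
  have hprob' := hprob i
  have hna' := hna i
  rw [← hμ i k]
  refine measure_congr (Filter.eventuallyEq_set.2 ?_)
  -- Off the null set of the points `t a`, each point lies in one segment only, and there the
  -- colour is that of the midpoint.
  have hnull : ∀ᵐ x ∂(μs i), x ∈ Set.Icc (0 : ℝ) 1 ∧ x ∉ Set.range t := by
    refine Filter.Eventually.and (hsupp i) ?_
    exact measure_eq_zero_iff_ae_notMem.1 ((Set.finite_range t).measure_zero (μs i))
  filter_upwards [hnull] with x hx
  obtain ⟨⟨hx0, hx1⟩, hxt⟩ := hx
  have hne : ∀ a, t a ≠ x := fun a h => hxt ⟨a, h⟩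
  obtain ⟨j, hj1, hj2⟩ : ∃ j : Fin (n * (r - 1) + 1), t j.castSucc < x ∧ x < t j.succ := by
    by_contra! hcon
    have : ∀ a, t a < x := by
      intro a
      induction a using Fin.induction with
      | zero => exact lt_of_le_of_ne (ht0 ▸ hx0) (hne 0)
      | succ j ih => exact lt_of_le_of_ne (hcon j ih) (hne _)
    exact absurd (ht1 ▸ this (Fin.last _)) (not_lt.2 hx1)
  have hgap : ∀ s ∈ S, ¬ (t j.castSucc < s ∧ s < t j.succ) := by
    rintro s hs ⟨hs1, hs2⟩
    have hsT : s ∈ T := hTsub (Finset.mem_filter.2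
      ⟨hs, (hmem _).1.trans_lt hs1, hs2.trans_le (hmem _).2⟩)
    obtain ⟨a, rfl⟩ := hrange s (by simp [hsT])
    rw [t.lt_iff_lt] at hs1 hs2
    rw [Fin.lt_def] at hs1 hs2
    simp at hs1 hs2
    omega
  have hcol : c x = c ((t j.castSucc + t j.succ) / 2) := by
    rcases lt_trichotomy x ((t j.castSucc + t j.succ) / 2) with h | h | h
    · exact hc _ _ h fun s hs hs' => hgap s hs ⟨by linarith [hs'.1], by linarith [hs'.2]⟩
    · rw [← h]
    · exact (hc _ _ h fun s hs hs' =>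
        hgap s hs ⟨by linarith [hs'.1], by linarith [hs'.2]⟩).symm
  have huniq : ∀ j', x ∈ Set.Icc (t (Fin.castSucc j')) (t j'.succ) → j' = j := by
    rintro j' ⟨h1, h2⟩
    have e1 := t.lt_iff_lt.1 (h1.trans_lt hj2)
    have e2 := t.lt_iff_lt.1 (hj1.trans_le h2)
    rw [Fin.lt_def] at e1 e2
    simp at e1 e2
    exact Fin.ext (by omega)
  simp only [Set.mem_iUnion, Set.mem_preimage, Set.mem_singleton_iff]
  constructor
  · rintro ⟨j', hk, hxj⟩
    obtain rfl := huniq j' hxj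
    rw [hcol, hk]
  · intro hk
    exact ⟨j, by rw [← hcol, hk], hj1.le, hj2.le⟩
end

section
/- Let μ₁, …, μₙ be probability measures on [0,1] absolutely continuous with respect to Lebesgue measure, and let q be a prime power. Then there exist q pairwise distinct real polynomials u₁, …, u_q of degree at most n such that, setting Vⱼ = {x ∈ [0,1] : uⱼ(x) ≥ u_l(x) for all l = 1, …, q}, each Vⱼ is a finite union of closed intervals and μᵢ(Vⱼ) = 1/q for every i = 1, …, n and every j = 1, …, q. -/
/-!
A configuration is a real matrix `x` with `n` rows and `q` columns, and the `j`-th polynomial has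
the entries of the column `j` as its coefficients of degrees `1, …, n`. Its constant term `rank x j`
counts, with continuous weights, the earlier columns close to the column `j`. Hence the polynomials
are distinct even if columns coincide, and they are permuted along with the columns by each
permutation that preserves the order of close columns. The excesses
`Φ x (i, j) = μᵢ (Vⱼ) - 1 / q` depend continuously on `x`, because distinct polynomials agree only
on a null set; the rows of `Φ x` have sum zero, and `Φ` has the same equivariance. The claim is
that `Φ` has a zero (`exists_zero`).

To find it, `Φ` is completed by the averages of the rows of `x` and deformed to the identity far
out. On a grid of mesh `1 / r`, a point is labelled by an entry at which the resulting map `F` is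
negative, or by `none` if `F` is nonnegative. The simplices of the Freudenthal triangulation that
carry all labels are counted with signs. Writing the signed indicator `ind` as a coboundary of
facets shows that the total depends only on the labels far out (`sum_cell_congr`), so `F` may be
replaced by the identity, for which the total is `±1` (`sum_cell_ref`).

If the columns of the base point of a cube do not form a single cluster, let `A` be the set of
columns in the clusters of the lexicographically smallest columns. The shuffles of `A` against its
complement preserve the labels, so that such cubes come in packets of `q.choose #A` cubes with equal
counts, a multiple of the prime `p` dividing `q` (`sum_cell_mod`). As `±1` is not divisible by `p`,
some cube whose columns form a single cluster contains a fully labelled simplex (`exists_cell`).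
As the mesh tends to zero, these simplices accumulate at a zero of `F`. There the columns are at
bounded distance and the averages of the rows vanish, which places the point in the region where
`F` is `Φ` plus averages. So it is a zero of `Φ`.

Finally, each cell is a union of intervals with end points among `0`, `1` and the roots of the
differences of the polynomials (`cellOf_eq_iUnion`).
-/

open MeasureTheory

namespace Equipart

/-! ### Signed counts of fully labelled simplices -/

section Sperner

variable {ι : Type*} [Fintype ι] [DecidableEq ι] {m : ℕ}

/-- The `k`-th vertex of the Freudenthal simplex with base `v` and direction order `π`:
the coordinates `π 0, …, π (k - 1)` of `v` have been raised by one. -/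
def path (v : ι → ℤ) (π : Fin (m + 1) ≃ ι) (k : Fin (m + 2)) : ι → ℤ :=
  fun b => v b + if (π.symm b : ℕ) < k then 1 else 0

/-- The enumeration of all labels that starts with `none` and continues in the order `π`. -/
def col (π : Fin (m + 1) ≃ ι) : Fin (m + 2) → Option ι :=
  Fin.cons none (fun l => some (π l))

omit [Fintype ι] [DecidableEq ι] in
lemma col_zero (π : Fin (m + 1) ≃ ι) : col π 0 = none := rfl

omit [Fintype ι] [DecidableEq ι] in
lemma col_succ (π : Fin (m + 1) ≃ ι) (c : Fin (m + 1)) : col π c.succ = some (π c) := rfl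

/-- The signed indicator that a Freudenthal simplex is fully labelled: the determinant of the
incidence matrix between its vertices and the labels. Ordering the labels by `π` as well builds
the orientation sign of `π` into the determinant. -/
def ind (l : (ι → ℤ) → Option ι) (v : ι → ℤ) (π : Fin (m + 1) ≃ ι) : ℤ :=
  (Matrix.of fun k c => if l (path v π k) = col π c then (1 : ℤ) else 0).det

/-- The signed indicator that the facet opposite to vertex `k` carries all labels but `none`. -/
def face (l : (ι → ℤ) → Option ι) (v : ι → ℤ) (π : Fin (m + 1) ≃ ι) (k : Fin (m + 2)) : ℤ :=
  (Matrix.of fun r c => if l (path v π (k.succAbove r)) = some (π c) then (1 : ℤ) else 0).det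

lemma sum_col (π : Fin (m + 1) ≃ ι) (o : Option ι) :
    ∑ c, (if o = col π c then (1 : ℤ) else 0) = 1 := by
  rw [Fin.sum_univ_succ]
  cases o with
  | none => simp [col]
  | some b =>
    simp only [col, Fin.cons_zero, Fin.cons_succ, reduceCtorEq, if_false, zero_add,
      Option.some.injEq]
    rw [Equiv.sum_comp π (fun c => if b = c then (1 : ℤ) else 0)]
    simp

/-- Each row of the incidence matrix has entry sum one, so the column of the label `none` may be
replaced by a column of ones; expanding along it writes `ind` as a coboundary. -/
lemma ind_eq (l : (ι → ℤ) → Option ι) (v : ι → ℤ) (π : Fin (m + 1) ≃ ι) :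
    ind l v π = ∑ k : Fin (m + 2), (-1) ^ (k : ℕ) * face l v π k := by
  have h := Matrix.det_updateCol_sum
    (Matrix.of fun k c => if l (path v π k) = col π c then (1 : ℤ) else 0) 0 (fun _ => 1)
  simp only [one_smul] at h
  rw [ind, ← h, Matrix.det_succ_column_zero]
  refine Finset.sum_congr rfl fun k _ => ?_
  rw [Matrix.updateCol_self]
  simp only [Matrix.of_apply, sum_col, mul_one]
  congr 2

/-- Facets opposite to an inner vertex cancel in pairs: exchanging the two directions next to that
vertex keeps the facet and reverses the orientation. -/
lemma face_mid (l : (ι → ℤ) → Option ι) (v : ι → ℤ) (k : Fin m) :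
    ∑ π : Fin (m + 1) ≃ ι, face l v π k.succ.castSucc = 0 := by
  set s : Equiv.Perm (Fin (m + 1)) := Equiv.swap k.castSucc k.succ with hs
  have hne : k.castSucc ≠ k.succ := by
    intro h; simp [Fin.ext_iff] at h
  have hneg : ∀ π : Fin (m + 1) ≃ ι,
      face l v (s.trans π) k.succ.castSucc = - face l v π k.succ.castSucc := by
    intro π
    have hp : ∀ r, path v (s.trans π) (k.succ.castSucc.succAbove r)
        = path v π (k.succ.castSucc.succAbove r) := by
      intro r
      funext b
      simp only [path, Equiv.symm_trans_apply]
      congr 1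
      have h1 : ((k.succ.castSucc.succAbove r : Fin (m + 2)) : ℕ) ≠ k + 1 := by
        have := Fin.succAbove_ne k.succ.castSucc r
        intro h; apply this; ext; simpa using h
      have h2 : ((s.symm (π.symm b) : Fin (m + 1)) : ℕ) =
          if (π.symm b : ℕ) = k then (k : ℕ) + 1 else
            if (π.symm b : ℕ) = k + 1 then (k : ℕ) else π.symm b := by
        rw [hs, Equiv.symm_swap, Equiv.swap_apply_def]
        simp only [Fin.ext_iff, Fin.val_castSucc, Fin.val_succ]
        split_ifs <;> simp
      refine if_congr ?_ rfl rfl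
      rw [h2]
      split_ifs <;> omega
    have hM : face l v (s.trans π) k.succ.castSucc =
        ((Matrix.of fun r c => if l (path v π (k.succ.castSucc.succAbove r)) = some (π c)
          then (1 : ℤ) else 0).submatrix id s).det := by
      simp only [face, hp]
      rfl
    rw [hM, Matrix.det_permute', hs, Equiv.Perm.sign_swap hne]
    simp [face]
  refine Finset.sum_involution (fun π _ => s.trans π) ?_ ?_ ?_ ?_
  · intro π _; rw [hneg]; ring
  · intro π _ _ h
    have := congrArg (fun e : Fin (m + 1) ≃ ι => π.symm (e k.castSucc)) h
    simp [hs] at this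
    exact hne this.symm
  · intros; exact Finset.mem_univ _
  · intro π _
    ext x; simp [hs]

omit [Fintype ι] in
/-- The facet opposite to the first vertex of one simplex is the facet opposite to the last vertex
of a simplex in the adjacent cube, with the directions rotated cyclically. -/
lemma face_first (l : (ι → ℤ) → Option ι) (v : ι → ℤ) (π : Fin (m + 1) ≃ ι) :
    face l v π 0 = (-1) ^ m *
      face l (v + Pi.single (((finRotate (m + 1)).trans π) (Fin.last m)) 1)
        ((finRotate (m + 1)).trans π) (Fin.last (m + 1)) := by
  have hp : ∀ r : Fin (m + 1),
      path (v + Pi.single (((finRotate (m + 1)).trans π) (Fin.last m)) 1)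
        ((finRotate (m + 1)).trans π) r.castSucc = path v π r.succ := by
    intro r
    funext b
    obtain ⟨x, rfl⟩ := (((finRotate (m + 1)).trans π)).surjective b
    simp only [path, Pi.add_apply, Pi.single_apply, EmbeddingLike.apply_eq_iff_eq,
      Equiv.symm_apply_apply]
    simp only [Equiv.trans_apply, Equiv.symm_apply_apply]
    rcases Fin.eq_castSucc_or_eq_last x with ⟨y, rfl⟩ | rfl
    · rw [finRotate_of_lt (by simp)]
      have : y.castSucc ≠ Fin.last m := (Fin.castSucc_lt_last y).ne
      simp [this]
    · have : ¬ (m < (r : ℕ)) := by omega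
      simp [this]
  have hM : face l (v + Pi.single (((finRotate (m + 1)).trans π) (Fin.last m)) 1)
        ((finRotate (m + 1)).trans π) (Fin.last (m + 1)) =
        ((Matrix.of fun r c => if l (path v π (Fin.succAbove 0 r)) = some (π c)
          then (1 : ℤ) else 0).submatrix id (finRotate (m + 1))).det := by
    unfold face
    congr 1
    ext r c
    rw [Matrix.of_apply, Fin.succAbove_last, hp]
    rfl
  rw [hM, Matrix.det_permute', sign_finRotate]
  simp only [face, Nat.add_sub_cancel]
  rw [← mul_assoc]
  simp [← mul_pow]

/-- Sum of the signed fully labelled simplices of the cube with base vertex `v`. -/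
def cell (m : ℕ) (l : (ι → ℤ) → Option ι) (v : ι → ℤ) : ℤ :=
  ∑ π : Fin (m + 1) ≃ ι, ind l v π

/-- Only the facets opposite to the first and the last vertex survive in the sum over a cube; they
pair up between adjacent cubes, so that sums of `cell` telescope. -/
lemma cell_eq (l : (ι → ℤ) → Option ι) (v : ι → ℤ) :
    cell m l v = (-1) ^ m * ∑ π : Fin (m + 1) ≃ ι,
      (face l (v + Pi.single (π (Fin.last m)) 1) π (Fin.last (m + 1))
        - face l v π (Fin.last (m + 1))) := by
  have h1 : cell m l v = ∑ k : Fin (m + 2), (-1) ^ (k : ℕ) *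
      ∑ π : Fin (m + 1) ≃ ι, face l v π k := by
    unfold cell
    simp only [ind_eq, Finset.mul_sum]
    rw [Finset.sum_comm]
  rw [h1, Fin.sum_univ_succ, Fin.sum_univ_castSucc]
  have h2 : ∀ k : Fin m, ((-1 : ℤ)) ^ ((k.castSucc.succ : Fin (m + 2)) : ℕ) *
      ∑ π : Fin (m + 1) ≃ ι, face l v π k.castSucc.succ = 0 := by
    intro k
    rw [Fin.succ_castSucc, face_mid, mul_zero]
  rw [Finset.sum_eq_zero (fun k _ => h2 k), zero_add]
  simp only [face_first, ← Finset.mul_sum]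
  have h3 := Equiv.sum_comp (Equiv.equivCongr (finRotate (m + 1)).symm (Equiv.refl ι))
    (fun π : Fin (m + 1) ≃ ι => face l (v + Pi.single (π (Fin.last m)) 1) π (Fin.last (m + 1)))
  have h4 : ∀ π : Fin (m + 1) ≃ ι,
      Equiv.equivCongr (finRotate (m + 1)).symm (Equiv.refl ι) π
        = (finRotate (m + 1)).trans π := by
    intro π; ext; simp
  simp only [h4] at h3
  rw [h3, Finset.sum_sub_distrib]
  simp [pow_succ]
  ring

/-- The lattice box of radius `K`. -/
noncomputable def box (ι : Type*) [Fintype ι] [DecidableEq ι] (K : ℤ) : Finset (ι → ℤ) :=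
  Fintype.piFinset fun _ => Finset.Icc (-K) K

lemma mem_box {K : ℤ} {v : ι → ℤ} : v ∈ box ι K ↔ ∀ b, |v b| ≤ K := by
  simp [box, abs_le]

/-- The signed number of fully labelled simplices in the cubes based in a box depends only on the
labels near the boundary of the box and beyond. -/
lemma sum_cell_congr {K : ℤ} (l l' : (ι → ℤ) → Option ι)
    (h : ∀ v, (∃ b, K ≤ |v b|) → l v = l' v) :
    ∑ v ∈ box ι (K + 1), cell m l v = ∑ v ∈ box ι (K + 1), cell m l' v := by
  set D : (Fin (m + 1) ≃ ι) → (ι → ℤ) → ℤ :=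
    fun π v => face l v π (Fin.last (m + 1)) - face l' v π (Fin.last (m + 1)) with hD
  have hsupp : ∀ π v, D π v ≠ 0 → ∀ b, -K ≤ v b ∧ v b ≤ K := by
    intro π v hne
    have : ∃ k : Fin (m + 2), l (path v π k) ≠ l' (path v π k) := by
      by_contra! hcon
      apply hne
      simp [hD, face, hcon]
    obtain ⟨k, hk⟩ := this
    have hb : ∀ b, |path v π k b| < K := by
      by_contra! hcon
      exact hk (h _ hcon)
    intro b
    have := hb b
    simp only [path, abs_lt] at this
    split_ifs at this <;> omega
  rw [← sub_eq_zero, ← Finset.sum_sub_distrib]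
  have h1 : ∀ v, cell m l v - cell m l' v = (-1) ^ m * ∑ π : Fin (m + 1) ≃ ι,
      (D π (v + Pi.single (π (Fin.last m)) 1) - D π v) := by
    intro v
    rw [cell_eq, cell_eq, ← mul_sub, ← Finset.sum_sub_distrib]
    congr 1
    refine Finset.sum_congr rfl fun π _ => ?_
    simp only [hD]; ring
  simp only [h1, ← Finset.mul_sum]
  rw [Finset.sum_comm]
  refine mul_eq_zero_of_right _ (Finset.sum_eq_zero fun π _ => ?_)
  rw [Finset.sum_sub_distrib, sub_eq_zero]
  have e1 : ∑ᶠ v : ι → ℤ, D π v = ∑ v ∈ box ι (K + 1), D π v := by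
    apply finsum_eq_sum_of_support_subset
    intro v hv
    have := hsupp π v hv
    rw [Finset.mem_coe, mem_box]
    intro b
    rw [abs_le]; have := this b; omega
  have e2 : ∑ᶠ v : ι → ℤ, D π (v + Pi.single (π (Fin.last m)) 1) =
      ∑ v ∈ box ι (K + 1), D π (v + Pi.single (π (Fin.last m)) 1) := by
    apply finsum_eq_sum_of_support_subset
    intro v hv
    have := hsupp π _ hv
    rw [Finset.mem_coe, mem_box]
    intro b
    rw [abs_le]; have := this b
    simp only [Pi.add_apply, Pi.single_apply] at this
    split_ifs at this <;> omega
  rw [← e1, ← e2]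
  exact finsum_comp_equiv (Equiv.addRight (Pi.single (π (Fin.last m)) 1 : ι → ℤ))

omit [Fintype ι] in
/-- If a label is missing, the incidence matrix has a zero column. -/
lemma ind_ne_zero {l : (ι → ℤ) → Option ι} {v : ι → ℤ} {π : Fin (m + 1) ≃ ι}
    (h : ind l v π ≠ 0) (o : Option ι) : ∃ k, l (path v π k) = o := by
  by_contra! hcon
  apply h
  obtain ⟨c, hc⟩ : ∃ c, col π c = o := by
    cases o with
    | none => exact ⟨0, rfl⟩
    | some b => exact ⟨(π.symm b).succ, by simp [col]⟩
  apply Matrix.det_eq_zero_of_column_eq_zero c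
  intro k
  simp [hc, hcon k]

/-- Peeling off a chosen element of what is left, until nothing is left, produces exactly one
enumeration. -/
lemma existsUnique_order (hcard : Fintype.card ι = m + 1) (f : Finset ι → ι)
    (hf : ∀ S : Finset ι, S.Nonempty → f S ∈ S) :
    ∃! π : Fin (m + 1) ≃ ι, ∀ k, f (Finset.univ.filter fun b => k ≤ π.symm b) = π k := by
  let S : ℕ → Finset ι := fun k => Nat.rec Finset.univ (fun _ T => T.erase (f T)) k
  have S0 : S 0 = Finset.univ := rfl
  have Ss : ∀ k, S (k + 1) = (S k).erase (f (S k)) := fun k => rfl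
  have hS : ∀ k, k ≤ m + 1 → (S k).card = m + 1 - k := by
    intro k
    induction k with
    | zero => intro _; simp [S0, hcard]
    | succ k ih =>
      intro hk
      have h1 := ih (by omega)
      have : (S k).Nonempty := by rw [← Finset.card_pos]; omega
      rw [Ss, Finset.card_erase_of_mem (hf _ this)]; omega
  have hmono : ∀ k l, k ≤ l → S l ⊆ S k := by
    intro k l hkl
    induction l, hkl using Nat.le_induction with
    | base => exact subset_rfl
    | succ l _ ih => rw [Ss]; exact (Finset.erase_subset _ _).trans ih
  have hmem : ∀ l, l ≤ m → f (S l) ∈ S l := by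
    intro l hl
    apply hf
    rw [← Finset.card_pos, hS l (by omega)]; omega
  have hnot : ∀ k l, k < l → f (S k) ∉ S l := by
    intro k l hkl h
    have := hmono (k + 1) l hkl h
    rw [Ss] at this
    simp at this
  have hinj : Function.Injective (fun k : Fin (m + 1) => f (S k)) := by
    intro a b hab
    by_contra hne
    rcases lt_or_gt_of_ne hne with h | h
    · have h1 := hnot a b h
      simp only at hab
      rw [hab] at h1
      exact h1 (hmem b (by omega))
    · have h1 := hnot b a h
      simp only at hab
      rw [← hab] at h1
      exact h1 (hmem a (by omega))
  have hbij : Function.Bijective (fun k : Fin (m + 1) => f (S k)) := by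
    rw [Fintype.bijective_iff_injective_and_card]
    exact ⟨hinj, by simp [hcard]⟩
  set e := Equiv.ofBijective _ hbij with he
  have hel : ∀ l, e l = f (S l) := fun _ => rfl
  refine ⟨e, ?_, ?_⟩
  · intro k
    have : (Finset.univ.filter fun b => k ≤ e.symm b) = S k := by
      ext b
      obtain ⟨l, rfl⟩ := e.surjective b
      simp only [Finset.mem_filter, Finset.mem_univ, true_and, Equiv.symm_apply_apply]
      rw [hel]
      constructor
      · intro h
        exact hmono k l h (hmem l (by omega))
      · intro h
        by_contra hlt
        exact hnot l k (by simpa using hlt) h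
    rw [this]
    rfl
  · intro π hπ
    have key : ∀ k : ℕ, ∀ hk : k < m + 1, π ⟨k, hk⟩ = f (S k) := by
      intro k
      induction k using Nat.strong_induction_on with
      | _ k ih =>
        intro hk
        have : (Finset.univ.filter fun b => (⟨k, hk⟩ : Fin (m + 1)) ≤ π.symm b) = S k := by
          refine Finset.eq_of_superset_of_card_ge ?_ ?_
          · intro b hb
            simp only [Finset.mem_filter, Finset.mem_univ, true_and]
            by_contra hlt
            have hlt' : (π.symm b : ℕ) < k := by simpa [Fin.lt_def] using hlt
            have h1 := ih _ hlt' (by omega)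
            simp only [Fin.eta, Equiv.apply_symm_apply] at h1
            have h2 := hnot _ _ hlt'
            rw [← h1] at h2
            exact h2 hb
          · rw [hS k hk.le, ← Finset.card_map π.symm.toEmbedding]
            have : (Finset.univ.filter fun b => (⟨k, hk⟩ : Fin (m + 1)) ≤ π.symm b).map
                π.symm.toEmbedding = Finset.Ici ⟨k, hk⟩ := by
              ext x
              simp only [Finset.mem_map_equiv, Equiv.symm_symm, Finset.mem_filter, Finset.mem_univ,
                true_and, Equiv.symm_apply_apply, Finset.mem_Ici]
            rw [this, Fin.card_Ici]
        rw [← hπ, this]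
    ext k
    exact key k k.2

/-- A labelling by negative coordinates has exactly one fully labelled simplex: it sits in the
cube between `-1` and `0`, where the labels themselves dictate the order of the directions. -/
lemma sum_cell_ref (hcard : Fintype.card ι = m + 1) {K : ℤ} (hK : 1 ≤ K)
    (L : (ι → ℤ) → Option ι)
    (hnone : ∀ v, L v = none ↔ ∀ b, 0 ≤ v b) (hsome : ∀ v b, L v = some b → v b < 0) :
    ∑ v ∈ box ι K, cell m L v = (-1) ^ (m + 1) := by
  rw [Finset.sum_eq_single (fun _ => -1)]
  rotate_left
  · intro v _ hv
    refine Finset.sum_eq_zero fun π _ => ?_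
    by_contra hne
    apply hv
    funext b
    obtain ⟨k, hk⟩ := ind_ne_zero hne (some b)
    obtain ⟨k', hk'⟩ := ind_ne_zero hne none
    have h1 := hsome _ _ hk
    have h2 := (hnone _).1 hk' b
    simp only [path] at h1 h2
    split_ifs at h1 h2 <;> omega
  · intro h
    exfalso; apply h
    rw [mem_box]; intro b; simpa using hK
  have hne : Nonempty ι := by rw [← Fintype.card_pos_iff]; omega
  let V : Finset ι → ι → ℤ := fun S b => if b ∈ S then -1 else 0
  have hV : ∀ S : Finset ι, S.Nonempty → ∃ b ∈ S, L (V S) = some b := by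
    intro S ⟨c, hc⟩
    cases h : L (V S) with
    | none =>
      have := (hnone _).1 h c
      simp [V, hc] at this
    | some b =>
      refine ⟨b, ?_, rfl⟩
      have := hsome _ _ h
      by_contra hb
      simp [V, hb] at this
  let f : Finset ι → ι := fun S => (L (V S)).getD hne.some
  have hf : ∀ S : Finset ι, S.Nonempty → f S ∈ S ∧ L (V S) = some (f S) := by
    intro S hS
    obtain ⟨b, hb, h⟩ := hV S hS
    simp [f, h, hb]
  have hpath : ∀ (π : Fin (m + 1) ≃ ι) (k : Fin (m + 1)),
      path (fun _ => -1) π k.castSucc = V (Finset.univ.filter fun b => k ≤ π.symm b) := by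
    intro π k
    funext b
    simp only [path, V, Finset.mem_filter, Finset.mem_univ, true_and, Fin.val_castSucc, Fin.le_def]
    split_ifs <;> omega
  have hlab : ∀ (π : Fin (m + 1) ≃ ι) (k : Fin (m + 1)),
      L (path (fun _ => -1) π k.castSucc)
        = some (f (Finset.univ.filter fun b => k ≤ π.symm b)) := by
    intro π k
    rw [hpath]
    exact (hf _ ⟨π k, by simp⟩).2
  have hlast : ∀ (π : Fin (m + 1) ≃ ι), L (path (fun _ => -1) π (Fin.last _)) = none := by
    intro π
    rw [hnone]
    intro b
    have := (π.symm b).2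
    simp only [path, Fin.val_last]
    rw [if_pos this]
    norm_num
  obtain ⟨π₀, hπ₀, huniq⟩ := existsUnique_order hcard f (fun S hS => (hf S hS).1)
  unfold cell
  rw [Finset.sum_eq_single π₀]
  · have : ind L (fun _ => -1) π₀ =
        ((1 : Matrix (Fin (m + 2)) (Fin (m + 2)) ℤ).submatrix (finRotate (m + 2)) id).det := by
      unfold ind
      congr 1
      ext k c
      simp only [Matrix.of_apply, Matrix.submatrix_apply, id, Matrix.one_apply]
      refine if_congr ?_ rfl rfl
      rcases Fin.eq_castSucc_or_eq_last k with ⟨y, rfl⟩ | rfl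
      · rw [hlab, hπ₀, finRotate_of_lt (by have := y.2; simp; omega)]
        rcases Fin.eq_zero_or_eq_succ c with rfl | ⟨d, rfl⟩
        · rw [col_zero]
          exact ⟨fun h => (by cases h), fun h => by rw [Fin.ext_iff] at h; exact absurd h (by simp)⟩
        · rw [col_succ, Option.some.injEq, EmbeddingLike.apply_eq_iff_eq, Fin.ext_iff, Fin.ext_iff]
          simp only [Fin.val_castSucc, Fin.val_succ]
          omega
      · rw [hlast, finRotate_last]
        rcases Fin.eq_zero_or_eq_succ c with rfl | ⟨d, rfl⟩
        · rw [col_zero]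
          exact ⟨fun _ => rfl, fun _ => rfl⟩
        · rw [col_succ]
          exact ⟨fun h => (by cases h), fun h => by rw [Fin.ext_iff] at h; exact absurd h (by simp)⟩
    rw [this, Matrix.det_permute, sign_finRotate]
    simp
  · intro π _ hπ
    by_contra hne'
    apply hπ
    apply huniq
    set F : Fin (m + 1) → Fin (m + 1) :=
      fun k => π.symm (f (Finset.univ.filter fun b => k ≤ π.symm b)) with hF
    have hle : ∀ k, k ≤ F k := by
      intro k
      have := (hf (Finset.univ.filter fun b => k ≤ π.symm b) ⟨π k, by simp⟩).1
      simpa using this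
    have hsurj : Function.Surjective F := by
      intro x
      obtain ⟨k, hk⟩ := ind_ne_zero hne' (some (π x))
      rcases Fin.eq_castSucc_or_eq_last k with ⟨y, rfl⟩ | rfl
      · rw [hlab] at hk
        refine ⟨y, ?_⟩
        simp only [hF]
        rw [Option.some.inj hk]; simp
      · rw [hlast] at hk; simp at hk
    -- An injective self-map of a finite linear order that nowhere decreases is the identity.
    have hsum : ∑ k, ((k : Fin (m + 1)) : ℕ) = ∑ k, (F k : ℕ) :=
      (Equiv.sum_comp (Equiv.ofBijective F (Finite.surjective_iff_bijective.1 hsurj))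
        (fun k : Fin (m + 1) => (k : ℕ))).symm
    have := (Finset.sum_eq_sum_iff_of_le (fun (k : Fin (m + 1)) _ => (Fin.le_def.1 (hle k)))).1 hsum
    intro k
    have hk : k = F k := Fin.ext (this k (Finset.mem_univ _))
    rw [hF] at hk
    conv_rhs => rw [hk]
    simp
  · simp

end Sperner

/-! ### Shuffles of columns -/

section Symmetry

variable {n q : ℕ}

/-- The permutation of the index set `Fin n × Fin q` induced by a permutation of `Fin q`. -/
def act (n : ℕ) (g : Equiv.Perm (Fin q)) : (Fin n × Fin q) ≃ (Fin n × Fin q) :=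
  Equiv.prodCongr (Equiv.refl _) g

/-- The action of a permutation of `Fin q` on configurations: column `j` becomes column `g j`. -/
def move {α : Type*} (g : Equiv.Perm (Fin q)) (v : Fin n × Fin q → α) : Fin n × Fin q → α :=
  fun b => v ((act n g).symm b)

lemma move_act {α : Type*} (g : Equiv.Perm (Fin q)) (v : Fin n × Fin q → α) (b) :
    move g v (act n g b) = v b := by
  simp [move]

lemma move_apply {α : Type*} (g : Equiv.Perm (Fin q)) (v : Fin n × Fin q → α) (i j) :
    move g v (i, g j) = v (i, j) := move_act g v (i, j)

lemma move_eq_iff {α : Type*} (g : Equiv.Perm (Fin q)) (v w : Fin n × Fin q → α) :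
    move g v = w ↔ ∀ b, w (act n g b) = v b := by
  constructor
  · rintro rfl b; exact move_act g v b
  · intro h
    funext b
    obtain ⟨c, rfl⟩ := (act n g).surjective b
    rw [move_act, h]

/-- `move g` as a bijection. -/
def moveEquiv (n : ℕ) (g : Equiv.Perm (Fin q)) : (Fin n × Fin q → ℤ) ≃ (Fin n × Fin q → ℤ) :=
  Equiv.arrowCongr (act n g) (Equiv.refl ℤ)

lemma moveEquiv_apply (g : Equiv.Perm (Fin q)) (v : Fin n × Fin q → ℤ) :
    moveEquiv n g v = move g v := rfl

lemma move_mem_box (g : Equiv.Perm (Fin q)) (v : Fin n × Fin q → ℤ) (K : ℤ) :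
    move g v ∈ box (Fin n × Fin q) K ↔ v ∈ box (Fin n × Fin q) K := by
  rw [mem_box, mem_box, (act n g).surjective.forall]
  simp only [move_act]

lemma path_move {m : ℕ} (g : Equiv.Perm (Fin q)) (v : Fin n × Fin q → ℤ)
    (π : Fin (m + 1) ≃ Fin n × Fin q) (k : Fin (m + 2)) :
    path (move g v) (π.trans (act n g)) k = move g (path v π k) := rfl

lemma cell_move {m : ℕ} (l : (Fin n × Fin q → ℤ) → Option (Fin n × Fin q))
    (g : Equiv.Perm (Fin q)) (v : Fin n × Fin q → ℤ)
    (h : ∀ (π : Fin (m + 1) ≃ Fin n × Fin q) k,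
      l (move g (path v π k)) = (l (path v π k)).map (act n g)) :
    cell m l (move g v) = cell m l v := by
  unfold cell
  rw [← Equiv.sum_comp (Equiv.equivCongr (Equiv.refl (Fin (m + 1))) (act n g))]
  refine Finset.sum_congr rfl fun π _ => ?_
  have h1 : Equiv.equivCongr (Equiv.refl (Fin (m + 1))) (act n g) π = π.trans (act n g) := by
    ext <;> simp
  rw [h1]
  unfold ind
  congr 1
  ext k c
  simp only [Matrix.of_apply, path_move, h]
  refine if_congr ?_ rfl rfl
  have h2 : col (π.trans (act n g)) c = (col π c).map (act n g) := by
    rcases Fin.eq_zero_or_eq_succ c with rfl | ⟨d, rfl⟩ <;> rfl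
  rw [h2]
  exact (Option.map_injective (act n g).injective).eq_iff

/-- Two subsets of equal size are exchanged by a shuffle: a permutation that is increasing on the
subset and on its complement. -/
lemma exists_shuffle (S T : Finset (Fin q)) (h : S.card = T.card) :
    ∃ g : Equiv.Perm (Fin q), S.map g.toEmbedding = T ∧
      ∀ i j, (i ∈ S ↔ j ∈ S) → i < j → g i < g j := by
  classical
  have hc : Sᶜ.card = Tᶜ.card := by rw [Finset.card_compl, Finset.card_compl, h]
  let e : S ≃o T := (S.orderIsoOfFin h).symm.trans (T.orderIsoOfFin rfl)
  let f : (Sᶜ : Finset (Fin q)) ≃o (Tᶜ : Finset (Fin q)) :=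
    (Finset.orderIsoOfFin Sᶜ hc).symm.trans (Finset.orderIsoOfFin Tᶜ rfl)
  let f' : {x // ¬ x ∈ S} ≃ {x // ¬ x ∈ T} :=
    ((Equiv.subtypeEquivRight fun x => (Finset.mem_compl (s := S)).symm).trans f.toEquiv).trans
      (Equiv.subtypeEquivRight fun x => (Finset.mem_compl (s := T)))
  let g : Equiv.Perm (Fin q) := Equiv.subtypeCongr e.toEquiv f'
  have g1 : ∀ i (hi : i ∈ S), g i = e ⟨i, hi⟩ := by
    intro i hi
    simp [g, Equiv.subtypeCongr, hi]
  have g2 : ∀ i (hi : i ∉ S), g i = f ⟨i, Finset.mem_compl.2 hi⟩ := by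
    intro i hi
    simp [g, Equiv.subtypeCongr, hi, f']
    rfl
  refine ⟨g, ?_, ?_⟩
  · refine Finset.eq_of_subset_of_card_le ?_ (by simp [h])
    intro x hx
    obtain ⟨i, hi, rfl⟩ := Finset.mem_map.1 hx
    rw [Equiv.coe_toEmbedding, g1 i hi]
    exact (e ⟨i, hi⟩).2
  · intro i j hij hlt
    by_cases hi : i ∈ S
    · have hj := hij.1 hi
      rw [g1 i hi, g1 j hj]
      exact e.lt_iff_lt.2 hlt
    · have hj : j ∉ S := fun hj => hi (hij.2 hj)
      rw [g2 i hi, g2 j hj]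
      exact f.lt_iff_lt.2 hlt

/-- If every cube is assigned a nonempty set `A v` of columns, and shuffles of `A v` against its
complement respect the labels, then the cubes with proper `A v` come in packets of
`q.choose a` cubes with equal contributions, so that modulo `p` only `A v = univ` counts. -/
lemma sum_cell_mod {m : ℕ} {p : ℤ} (hp : ∀ a, 0 < a → a < q → p ∣ (q.choose a : ℤ))
    (A : (Fin n × Fin q → ℤ) → Finset (Fin q)) (hne : ∀ v, (A v).Nonempty)
    (hA : ∀ g v, A (move g v) = (A v).map g.toEmbedding)
    (l : (Fin n × Fin q → ℤ) → Option (Fin n × Fin q))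
    (hl : ∀ (g : Equiv.Perm (Fin q)) v (π : Fin (m + 1) ≃ Fin n × Fin q) k,
      (∀ i j, (i ∈ A v ↔ j ∈ A v) → i < j → g i < g j) →
      l (move g (path v π k)) = (l (path v π k)).map (act n g)) (K : ℤ) :
    p ∣ ∑ v ∈ box (Fin n × Fin q) K, cell m l v
      - ∑ v ∈ (box (Fin n × Fin q) K).filter (fun v => A v = Finset.univ), cell m l v := by
  set Z : Finset (Fin q) → ℤ := fun S =>
    ∑ v ∈ (box (Fin n × Fin q) K).filter (fun v => A v = S), cell m l v with hZ
  have hZeq : ∀ S T : Finset (Fin q), S.card = T.card → Z S = Z T := by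
    intro S T hST
    obtain ⟨g, hg, hmono⟩ := exists_shuffle S T hST
    refine Finset.sum_equiv (moveEquiv n g) ?_ ?_
    · intro v
      rw [Finset.mem_filter, Finset.mem_filter, moveEquiv_apply, move_mem_box, hA, ← hg,
        Finset.map_inj]
    · intro v hv
      obtain ⟨_, rfl⟩ := Finset.mem_filter.1 hv
      rw [moveEquiv_apply, cell_move]
      intro π k
      exact hl g v π k hmono
  have hz : ∃ z : ℕ → ℤ, ∀ S, Z S = z S.card := by
    classical
    refine ⟨fun a => if h : ∃ S : Finset (Fin q), S.card = a then Z h.choose else 0, fun S => ?_⟩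
    have h : ∃ T : Finset (Fin q), T.card = S.card := ⟨S, rfl⟩
    simp only [h, dif_pos]
    exact hZeq _ _ h.choose_spec.symm
  obtain ⟨z, hz⟩ := hz
  have hsum : ∑ v ∈ box (Fin n × Fin q) K, cell m l v = ∑ S, Z S :=
    (Finset.sum_fiberwise _ A _).symm
  have h0 : z 0 = 0 := by
    have := hz ∅
    rw [Finset.card_empty] at this
    rw [← this]
    refine Finset.sum_eq_zero fun v hv => ?_
    have h1 := (Finset.mem_filter.1 hv).2
    exact absurd (hne v) (by simp [h1])
  have hq : Z Finset.univ = z q := by rw [hz]; simp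
  change p ∣ _ - Z Finset.univ
  rw [hsum, hq]
  simp only [hz]
  rw [← Finset.powerset_univ, Finset.sum_powerset_apply_card, Finset.card_univ, Fintype.card_fin,
    Finset.sum_range_succ]
  simp only [Nat.choose_self, one_smul, add_sub_cancel_right]
  refine Finset.dvd_sum fun a ha => ?_
  rcases Nat.eq_zero_or_pos a with rfl | hpos
  · simp [h0]
  · rw [nsmul_eq_mul]
    exact Dvd.dvd.mul_right (hp a hpos (Finset.mem_range.1 ha)) _

end Symmetry

/-! ### Equivariant labels and clusters of columns -/

section Labels

variable {n q : ℕ}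

/-- The column `j` of a matrix, that is the `j`-th of `q` points with `n` coordinates. -/
def colm {α : Type*} (x : Fin n × Fin q → α) (j : Fin q) : Fin n → α := fun i => x (i, j)

lemma colm_move {α : Type*} (g : Equiv.Perm (Fin q)) (x : Fin n × Fin q → α) (j : Fin q) :
    colm (move g x) (g j) = colm x j := by
  funext i; exact move_apply g x i j

/-- The key by which entries of a matrix are ordered: by row, then by the lexicographic order of
the columns, ties between equal columns being broken by their index. -/
def key (v : Fin n × Fin q → ℤ) (b : Fin n × Fin q) : Fin n ×ₗ (Lex (Fin n → ℤ) ×ₗ Fin q) :=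
  toLex (b.1, toLex (toLex (colm v b.2), b.2))

lemma key_injective (v : Fin n × Fin q → ℤ) : Function.Injective (key v) := by
  intro b c h
  have h1 := congrArg ofLex h
  simp only [key, ofLex_toLex, Prod.mk.injEq, EmbeddingLike.apply_eq_iff_eq] at h1
  exact Prod.ext h1.1 h1.2.2

lemma key_le_key (v : Fin n × Fin q → ℤ) (b c : Fin n × Fin q) :
    key v b ≤ key v c ↔ b.1 < c.1 ∨ b.1 = c.1 ∧ (toLex (colm v b.2) < toLex (colm v c.2) ∨
      colm v b.2 = colm v c.2 ∧ b.2 ≤ c.2) := by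
  simp only [key, Prod.Lex.toLex_le_toLex, EmbeddingLike.apply_eq_iff_eq]

open Classical in
/-- The entry of smallest key in a set of entries, if there is one. -/
noncomputable def pick (v : Fin n × Fin q → ℤ) (S : Finset (Fin n × Fin q)) :
    Option (Fin n × Fin q) :=
  if h : S.Nonempty then some (S.exists_min_image (key v) h).choose else none

lemma pick_eq_none {v : Fin n × Fin q → ℤ} {S : Finset (Fin n × Fin q)} :
    pick v S = none ↔ S = ∅ := by
  unfold pick
  split_ifs with h
  · simp [h.ne_empty]
  · simpa using h

lemma pick_eq_some {v : Fin n × Fin q → ℤ} {S : Finset (Fin n × Fin q)} {b} :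
    pick v S = some b ↔ b ∈ S ∧ ∀ c ∈ S, key v b ≤ key v c := by
  unfold pick
  split_ifs with h
  · have hs := (S.exists_min_image (key v) h).choose_spec
    rw [Option.some_inj]
    constructor
    · rintro rfl; exact hs
    · rintro ⟨h1, h2⟩
      exact key_injective v (le_antisymm (hs.2 _ h1) (h2 _ hs.1))
  · simp only [false_iff]
    rintro ⟨h1, -⟩
    exact h ⟨b, h1⟩

/-- Permuting the columns can change the selected entry only through the tie break between equal
columns. -/
lemma pick_move (g : Equiv.Perm (Fin q)) (v : Fin n × Fin q → ℤ) (S : Finset (Fin n × Fin q))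
    (hg : ∀ j k, colm v j = colm v k → j < k → g j < g k) :
    pick (move g v) (S.map (act n g).toEmbedding) = (pick v S).map (act n g) := by
  rcases h : pick v S with _ | b
  · rw [pick_eq_none] at h
    rw [Option.map_none, pick_eq_none, h, Finset.map_empty]
  · rw [Option.map_some, pick_eq_some]
    obtain ⟨h1, h2⟩ := pick_eq_some.1 h
    refine ⟨Finset.mem_map_of_mem _ h1, fun c hc => ?_⟩
    obtain ⟨d, hd, rfl⟩ := Finset.mem_map.1 hc
    have h3 := h2 d hd
    rw [key_le_key] at h3 ⊢
    have e : ∀ b : Fin n × Fin q, act n g b = (b.1, g b.2) := fun b => rfl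
    simp only [Equiv.coe_toEmbedding, e, colm_move]
    refine h3.imp id fun h => ⟨h.1, h.2.imp id fun h' => ⟨h'.1, ?_⟩⟩
    rcases h'.2.eq_or_lt with h4 | h4
    · rw [h4]
    · exact (hg _ _ h'.1 h4).le

/-- Two columns of an integer matrix are adjacent if they are at sup-distance less than `r`. -/
def near (r : ℤ) (v : Fin n × Fin q → ℤ) : SimpleGraph (Fin q) where
  Adj j k := j ≠ k ∧ ∀ i, |v (i, j) - v (i, k)| < r
  symm := ⟨fun j k h => ⟨h.1.symm, fun i => by rw [abs_sub_comm]; exact h.2 i⟩⟩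
  loopless := ⟨fun j h => h.1 rfl⟩

open Classical in
/-- The union of the clusters of columns that contain a lexicographically smallest column. -/
noncomputable def low (r : ℤ) (v : Fin n × Fin q → ℤ) : Finset (Fin q) :=
  Finset.univ.filter fun j => ∃ j₀, (∀ k, toLex (colm v j₀) ≤ toLex (colm v k)) ∧
    (near r v).Reachable j₀ j

lemma mem_low {r : ℤ} {v : Fin n × Fin q → ℤ} {j : Fin q} :
    j ∈ low r v ↔ ∃ j₀, (∀ k, toLex (colm v j₀) ≤ toLex (colm v k)) ∧
      (near r v).Reachable j₀ j := by
  simp [low]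

lemma low_nonempty [NeZero q] (r : ℤ) (v : Fin n × Fin q → ℤ) : (low r v).Nonempty := by
  obtain ⟨j, -, hj⟩ := (Finset.univ : Finset (Fin q)).exists_min_image (fun j => toLex (colm v j))
    ⟨0, Finset.mem_univ _⟩
  exact ⟨j, mem_low.2 ⟨j, fun k => hj k (Finset.mem_univ _), SimpleGraph.Reachable.refl _⟩⟩

lemma near_move (r : ℤ) (g : Equiv.Perm (Fin q)) (v : Fin n × Fin q → ℤ) (j k : Fin q) :
    (near r (move g v)).Adj (g j) (g k) ↔ (near r v).Adj j k := by
  simp [near, move_apply]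

lemma low_move (r : ℤ) (g : Equiv.Perm (Fin q)) (v : Fin n × Fin q → ℤ) :
    low r (move g v) = (low r v).map g.toEmbedding := by
  let e : near r v ≃g near r (move g v) := ⟨g, near_move r g v _ _⟩
  ext k
  obtain ⟨j, rfl⟩ := g.surjective k
  have h1 : g j ∈ (low r v).map g.toEmbedding ↔ j ∈ low r v := Finset.mem_map' g.toEmbedding
  rw [h1, mem_low, mem_low, g.surjective.exists]
  refine exists_congr fun j₀ => ?_
  rw [g.surjective.forall]
  simp only [colm_move]
  exact and_congr_right fun _ => e.reachable_iff

lemma far_of_low {r : ℤ} {v : Fin n × Fin q → ℤ} {j k : Fin q} (hj : j ∈ low r v)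
    (hk : k ∉ low r v) : ∃ i, r ≤ |v (i, j) - v (i, k)| := by
  by_contra! h
  obtain ⟨j₀, h0, h1⟩ := mem_low.1 hj
  refine hk (mem_low.2 ⟨j₀, h0, h1.trans (SimpleGraph.Adj.reachable ⟨?_, h⟩)⟩)
  rintro rfl
  exact hk hj

/-- If all columns form a single cluster, any two are joined by a path of length less than `q`. -/
lemma range_of_low {r : ℤ} (hr : 0 < r) {v : Fin n × Fin q → ℤ} (hv : low r v = Finset.univ)
    (i : Fin n) (j k : Fin q) : |v (i, j) - v (i, k)| ≤ q * r := by
  classical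
  have hw : ∀ {j k : Fin q} (w : (near r v).Walk j k), |v (i, j) - v (i, k)| ≤ w.length * r := by
    intro j k w
    induction w with
    | nil => simp
    | @cons a b c h w ih =>
      have h1 := h.2 i
      have h2 := abs_sub_le (v (i, a)) (v (i, b)) (v (i, c))
      rw [SimpleGraph.Walk.length_cons]
      push_cast
      linarith
  have hreach : (near r v).Reachable j k := by
    obtain ⟨j₀, h0, h1⟩ := mem_low.1 (hv ▸ Finset.mem_univ j)
    obtain ⟨k₀, h0', h1'⟩ := mem_low.1 (hv ▸ Finset.mem_univ k)
    refine h1.symm.trans (SimpleGraph.Reachable.trans ?_ h1')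
    by_cases hjk : j₀ = k₀
    · rw [hjk]
    have heq : colm v j₀ = colm v k₀ := toLex.injective (le_antisymm (h0 _) (h0' _))
    refine SimpleGraph.Adj.reachable ⟨hjk, fun i => ?_⟩
    have : v (i, j₀) = v (i, k₀) := congrFun heq i
    rw [this, sub_self, abs_zero]
    omega
  obtain ⟨w⟩ := hreach
  have h1 := hw (w.toPath : (near r v).Walk j k)
  have h2 := (w.toPath.2).length_lt
  rw [Fintype.card_fin] at h2
  refine h1.trans (mul_le_mul_of_nonneg_right ?_ hr.le)
  exact_mod_cast h2.le

end Labels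

/-! ### Zeros of equivariant maps -/

section Zero

open Filter Topology

variable {n q : ℕ}

/-- The mesh point with integer coordinates `w` in the grid of mesh `1 / r`. -/
noncomputable def grid (r : ℕ) (w : Fin n × Fin q → ℤ) : Fin n × Fin q → ℝ := fun b => w b / r

open Classical in
/-- The label of a grid point: the first entry where the map `F` is negative. -/
noncomputable def label (F : (Fin n × Fin q → ℝ) → Fin n × Fin q → ℝ) (r : ℕ)
    (w : Fin n × Fin q → ℤ) : Option (Fin n × Fin q) :=
  pick w (Finset.univ.filter fun b => F (grid r w) b < 0)

lemma label_eq_none {F : (Fin n × Fin q → ℝ) → Fin n × Fin q → ℝ} {r : ℕ}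
    {w : Fin n × Fin q → ℤ} : label F r w = none ↔ ∀ b, 0 ≤ F (grid r w) b := by
  simp [label, pick_eq_none, Finset.filter_eq_empty_iff]

lemma neg_of_label {F : (Fin n × Fin q → ℝ) → Fin n × Fin q → ℝ} {r : ℕ}
    {w : Fin n × Fin q → ℤ} {b} (h : label F r w = some b) : F (grid r w) b < 0 := by
  simpa using (pick_eq_some.1 h).1

lemma label_move {F : (Fin n × Fin q → ℝ) → Fin n × Fin q → ℝ} {r : ℕ} {w : Fin n × Fin q → ℤ}
    {g : Equiv.Perm (Fin q)} (hF : F (move g (grid r w)) = move g (F (grid r w)))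
    (hg : ∀ j k, colm w j = colm w k → j < k → g j < g k) :
    label F r (move g w) = (label F r w).map (act n g) := by
  unfold label
  rw [← pick_move g w _ hg]
  congr 1
  have hgrid : grid r (move g w) = move g (grid r w) := rfl
  ext b
  obtain ⟨c, rfl⟩ := (act n g).surjective b
  rw [Finset.mem_filter, hgrid, hF, move_act,
    show act n g c = (act n g).toEmbedding c from rfl, Finset.mem_map']
  simp

/-- The combinatorial core: near some grid point whose columns form a single cluster, the map `F`
is nonnegative somewhere and each of its entries is negative somewhere. -/
lemma exists_cell (hn : 0 < n) (hq : IsPrimePow q)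
    (F : (Fin n × Fin q → ℝ) → Fin n × Fin q → ℝ) (R : ℕ)
    (hR : ∀ x, (∃ b, (R : ℝ) ≤ |x b|) → F x = x)
    (hF : ∀ (g : Equiv.Perm (Fin q)) x,
      (∀ j k, dist (colm x j) (colm x k) < 1 / 2 → j < k → g j < g k) →
      F (move g x) = move g (F x)) (r : ℕ) (hr : 2 ≤ r) :
    ∃ v : Fin n × Fin q → ℤ, (∀ b, |v b| ≤ r * R + 1) ∧ low r v = Finset.univ ∧
      (∃ w : Fin n × Fin q → ℤ, (∀ b, v b ≤ w b ∧ w b ≤ v b + 1) ∧ ∀ b, 0 ≤ F (grid r w) b) ∧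
      ∀ b, ∃ w : Fin n × Fin q → ℤ, (∀ b, v b ≤ w b ∧ w b ≤ v b + 1) ∧ F (grid r w) b < 0 := by
  obtain ⟨p, k, hp, hk, rfl⟩ := hq
  have hp' : p.Prime := hp.nat_prime
  have hqpos : 0 < p ^ k := pow_pos hp'.pos k
  have : NeZero (p ^ k) := ⟨hqpos.ne'⟩
  have hr0 : (0 : ℝ) < r := by positivity
  obtain ⟨m, hm⟩ : ∃ m, n * p ^ k = m + 1 := ⟨n * p ^ k - 1, by
    have := Nat.mul_pos hn hqpos; omega⟩
  have hcard : Fintype.card (Fin n × Fin (p ^ k)) = m + 1 := by simp [hm]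
  have htotal : ∑ v ∈ box (Fin n × Fin (p ^ k)) ((r * R : ℕ) + 1), cell m (label F r) v
      = (-1) ^ (m + 1) := by
    classical
    rw [sum_cell_congr (label F r) (label (fun x => x) r)]
    · refine sum_cell_ref hcard (by linarith [Int.natCast_nonneg (r * R)]) _ ?_ ?_
      · intro v
        rw [label_eq_none]
        refine forall_congr' fun b => ?_
        simp only [grid]
        rw [le_div_iff₀ hr0, zero_mul, Int.cast_nonneg_iff]
      · intro v b h
        have h1 := neg_of_label h
        simp only [grid] at h1
        rw [div_lt_iff₀ hr0, zero_mul] at h1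
        exact_mod_cast h1
    · rintro v ⟨b, hb⟩
      unfold label
      rw [hR]
      refine ⟨b, ?_⟩
      simp only [grid, abs_div, abs_of_pos hr0]
      rw [le_div_iff₀ hr0]
      have : ((r * R : ℕ) : ℝ) ≤ |(v b : ℝ)| := by exact_mod_cast hb
      push_cast at this
      linarith
  have hmod := sum_cell_mod (m := m) (p := (p : ℤ)) (n := n) (q := p ^ k)
    (fun a ha haq => by exact_mod_cast hp'.dvd_choose_pow ha.ne' haq.ne)
    (low (r : ℤ)) (low_nonempty _) (low_move _) (label F r) ?_ ((r * R : ℕ) + 1)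
  · have hex : ∃ v ∈ (box (Fin n × Fin (p ^ k)) ((r * R : ℕ) + 1)).filter
        (fun v => low (r : ℤ) v = Finset.univ), cell m (label F r) v ≠ 0 := by
      by_contra! h
      rw [Finset.sum_eq_zero h, sub_zero, htotal] at hmod
      have h1 : ((-1 : ℤ) ^ (m + 1)).natAbs = 1 := by simp
      have h2 := Int.natAbs_dvd_natAbs.2 hmod
      rw [h1, Int.natAbs_natCast] at h2
      exact hp'.one_lt.ne' (Nat.dvd_one.1 h2)
    obtain ⟨v, hv, hne⟩ := hex
    obtain ⟨hv1, hv2⟩ := Finset.mem_filter.1 hv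
    obtain ⟨π, -, hπ⟩ := Finset.exists_ne_zero_of_sum_ne_zero hne
    have hpath : ∀ l b, v b ≤ path v π l b ∧ path v π l b ≤ v b + 1 := by
      intro l b
      unfold path
      split_ifs <;> constructor <;> omega
    refine ⟨v, ?_, hv2, ?_, ?_⟩
    · have := mem_box.1 hv1
      exact_mod_cast this
    · obtain ⟨l, hl⟩ := ind_ne_zero hπ none
      exact ⟨_, hpath l, label_eq_none.1 hl⟩
    · intro b
      obtain ⟨l, hl⟩ := ind_ne_zero hπ (some b)
      exact ⟨_, hpath l, neg_of_label hl⟩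
  · intro g v π l hg
    -- columns at distance less than `1 / 2` lie on the same side of the splitting of `v`
    have hsame : ∀ i j, dist (colm (grid r (path v π l)) i) (colm (grid r (path v π l)) j) < 1 / 2 →
        (i ∈ low (r : ℤ) v ↔ j ∈ low (r : ℤ) v) := by
      have key : ∀ i j, i ∈ low (r : ℤ) v → j ∉ low (r : ℤ) v →
          1 / 2 ≤ dist (colm (grid r (path v π l)) i) (colm (grid r (path v π l)) j) := by
        intro i j hi hj
        obtain ⟨c, hc⟩ := far_of_low hi hj
        refine le_trans ?_ (dist_le_pi_dist _ _ c)
        have h1 : (r : ℤ) - 1 ≤ |path v π l (c, i) - path v π l (c, j)| := by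
          unfold path
          rw [le_abs] at hc ⊢
          split_ifs <;> omega
        have h2 : (r : ℝ) - 1 ≤ |(path v π l (c, i) : ℝ) - path v π l (c, j)| := by
          exact_mod_cast h1
        simp only [colm, grid, Real.dist_eq]
        rw [← sub_div, abs_div, abs_of_pos hr0, div_le_div_iff₀ two_pos hr0]
        have : (2 : ℝ) ≤ r := by exact_mod_cast hr
        linarith
      intro i j hij
      constructor
      · intro hi
        by_contra hj
        exact absurd hij (not_lt.2 (key i j hi hj))
      · intro hj
        by_contra hi
        rw [dist_comm] at hij
        exact absurd hij (not_lt.2 (key j i hj hi))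
    refine label_move (hF g _ fun i j hij => hg i j (hsame i j hij)) fun i j hij => ?_
    refine hg i j (hsame i j ?_)
    have : colm (grid r (path v π l)) i = colm (grid r (path v π l)) j := by
      funext c
      have := congrFun hij c
      simp only [colm, grid] at this ⊢
      rw [this]
    rw [this, dist_self]
    norm_num

/-- Passing to the limit over finer and finer grids. -/
lemma exists_zero_ext (hn : 0 < n) (hq : IsPrimePow q)
    (F : (Fin n × Fin q → ℝ) → Fin n × Fin q → ℝ) (hc : Continuous F) (R : ℕ)
    (hR : ∀ x, (∃ b, (R : ℝ) ≤ |x b|) → F x = x)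
    (hF : ∀ (g : Equiv.Perm (Fin q)) x,
      (∀ j k, dist (colm x j) (colm x k) < 1 / 2 → j < k → g j < g k) →
      F (move g x) = move g (F x)) :
    ∃ x, F x = 0 ∧ ∀ i j k, |x (i, j) - x (i, k)| ≤ q := by
  have hex := fun r : ℕ => exists_cell hn hq F R hR hF (r + 2) (by omega)
  choose v hv1 hv2 h0 wb hwb hFb using hex
  choose w0 hw0 hF0 using h0
  have hpos : ∀ r : ℕ, (0 : ℝ) < ((r + 2 : ℕ) : ℝ) := fun r => by positivity
  have hbd : ∀ r, grid (r + 2) (v r) ∈ Metric.closedBall (0 : Fin n × Fin q → ℝ) (R + 1) := by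
    intro r
    rw [mem_closedBall_zero_iff, pi_norm_le_iff_of_nonneg (by positivity)]
    intro b
    have h1 : |(v r b : ℝ)| ≤ ((r + 2 : ℕ) : ℝ) * R + 1 := by exact_mod_cast hv1 r b
    rw [grid, Real.norm_eq_abs, abs_div, abs_of_pos (hpos r), div_le_iff₀ (hpos r)]
    have : (1 : ℝ) ≤ ((r + 2 : ℕ) : ℝ) := by push_cast; linarith [(Nat.cast_nonneg r : (0:ℝ) ≤ r)]
    linarith
  obtain ⟨x, -, φ, hφ, hx⟩ := (isCompact_closedBall _ _).tendsto_subseq hbd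
  have hinv : Tendsto (fun r => (1 : ℝ) / ((φ r + 2 : ℕ) : ℝ)) atTop (𝓝 0) := by
    have h1 : Tendsto (fun r : ℕ => (1 : ℝ) / ((r : ℕ) : ℝ)) atTop (𝓝 0) :=
      tendsto_one_div_atTop_nhds_zero_nat
    exact h1.comp ((tendsto_add_atTop_nat 2).comp hφ.tendsto_atTop)
  have hlim : ∀ w : ℕ → Fin n × Fin q → ℤ, (∀ r b, v r b ≤ w r b ∧ w r b ≤ v r b + 1) →
      Tendsto (fun r => F (grid (φ r + 2) (w (φ r)))) atTop (𝓝 (F x)) := by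
    intro w hw
    refine (hc.tendsto x).comp (tendsto_pi_nhds.2 fun b => ?_)
    have h0 : Tendsto (fun r => grid (φ r + 2) (v (φ r)) b) atTop (𝓝 (x b)) :=
      (tendsto_pi_nhds.1 hx) b
    have h1 : Tendsto (fun r => grid (φ r + 2) (w (φ r)) b - grid (φ r + 2) (v (φ r)) b) atTop
        (𝓝 0) := by
      refine squeeze_zero (fun r => ?_) (fun r => ?_) hinv
      · have : (v (φ r) b : ℝ) ≤ w (φ r) b := by exact_mod_cast (hw (φ r) b).1
        rw [grid, grid, ← sub_div]
        exact div_nonneg (by linarith) (hpos _).le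
      · have : (w (φ r) b : ℝ) ≤ v (φ r) b + 1 := by exact_mod_cast (hw (φ r) b).2
        rw [grid, grid, ← sub_div]
        exact div_le_div_of_nonneg_right (by linarith) (hpos _).le
    simpa using h0.add h1
  refine ⟨x, ?_, ?_⟩
  · funext b
    refine le_antisymm ?_ ?_
    · have h1 := (tendsto_pi_nhds.1 (hlim (fun r => wb r b) fun r => hwb r b)) b
      exact le_of_tendsto' h1 fun r => (hFb (φ r) b).le
    · have h1 := (tendsto_pi_nhds.1 (hlim w0 hw0)) b
      exact ge_of_tendsto' h1 fun r => hF0 (φ r) b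
  · intro i j k
    have h1 := (((tendsto_pi_nhds.1 hx) (i, j)).sub ((tendsto_pi_nhds.1 hx) (i, k))).abs
    refine le_of_tendsto' h1 fun r => ?_
    have h2 := range_of_low (by positivity) (hv2 (φ r)) i j k
    have h3 : |(v (φ r) (i, j) : ℝ) - v (φ r) (i, k)| ≤ q * ((φ r + 2 : ℕ) : ℝ) := by
      exact_mod_cast h2
    simp only [Function.comp_apply, grid]
    rw [← sub_div, abs_div, abs_of_pos (hpos _), div_le_iff₀ (hpos _)]
    exact h3

/-- The average of a row. -/
noncomputable def mean (x : Fin n × Fin q → ℝ) (i : Fin n) : ℝ := (∑ j, x (i, j)) / q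

/-- A cutoff that vanishes on the ball of radius `q` and equals one outside that of radius
`q + 1`. -/
noncomputable def cutoff (x : Fin n × Fin q → ℝ) : ℝ := max 0 (min 1 (‖x‖ - q))

/-- The map `Φ`, completed by the averages of the rows and deformed to the identity far out. -/
noncomputable def extend (Φ : (Fin n × Fin q → ℝ) → Fin n × Fin q → ℝ) (x : Fin n × Fin q → ℝ)
    (b : Fin n × Fin q) : ℝ :=
  (1 - cutoff x) * (Φ x b + mean x b.1) + cutoff x * x b

lemma continuous_extend {Φ : (Fin n × Fin q → ℝ) → Fin n × Fin q → ℝ} (hΦ : Continuous Φ) :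
    Continuous (extend Φ) := by
  refine continuous_pi fun b => ?_
  unfold extend cutoff mean
  have := (continuous_apply b).comp hΦ
  simp only [Function.comp_def] at this
  fun_prop

lemma mean_move (g : Equiv.Perm (Fin q)) (x : Fin n × Fin q → ℝ) (i : Fin n) :
    mean (move g x) i = mean x i := by
  unfold mean
  rw [← Equiv.sum_comp g]
  simp only [move_apply]

lemma cutoff_move (g : Equiv.Perm (Fin q)) (x : Fin n × Fin q → ℝ) :
    cutoff (move g x) = cutoff x := by
  have h : ‖move g x‖ = ‖x‖ := by
    apply le_antisymm
    · exact (pi_norm_le_iff_of_nonneg (norm_nonneg _)).2 fun b => norm_le_pi_norm x _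
    · refine (pi_norm_le_iff_of_nonneg (norm_nonneg _)).2 fun b => ?_
      rw [← move_act g x b]
      exact norm_le_pi_norm (move g x) _
  rw [cutoff, h, cutoff]

lemma extend_move {Φ : (Fin n × Fin q → ℝ) → Fin n × Fin q → ℝ} {g : Equiv.Perm (Fin q)}
    {x : Fin n × Fin q → ℝ} (h : Φ (move g x) = move g (Φ x)) :
    extend Φ (move g x) = move g (extend Φ x) := by
  rw [eq_comm, move_eq_iff]
  intro b
  have h1 : mean (move g x) (act n g b).1 = mean x b.1 := mean_move g x b.1
  rw [extend, extend, cutoff_move, h1, h, move_act, move_act]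

/-- An equivariant map (for the permutations that preserve the order of nearby columns) whose rows
have zero sum has a zero, provided that the number of columns is a prime power. -/
theorem exists_zero (hn : 0 < n) (hq : IsPrimePow q)
    (Φ : (Fin n × Fin q → ℝ) → Fin n × Fin q → ℝ) (hc : Continuous Φ)
    (hsum : ∀ x i, ∑ j, Φ x (i, j) = 0)
    (hΦ : ∀ (g : Equiv.Perm (Fin q)) x,
      (∀ j k, dist (colm x j) (colm x k) < 1 / 2 → j < k → g j < g k) →
      Φ (move g x) = move g (Φ x)) :
    ∃ x, Φ x = 0 := by
  have hq0 : (0 : ℝ) < q := by exact_mod_cast hq.pos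
  obtain ⟨x, hx, hrange⟩ := exists_zero_ext hn hq (extend Φ) (continuous_extend hc) (q + 1)
    (by
      rintro x ⟨b, hb⟩
      have h1 : cutoff x = 1 := by
        have := norm_le_pi_norm x b
        rw [Real.norm_eq_abs] at this
        push_cast at hb
        rw [cutoff, min_eq_left (by linarith), max_eq_right zero_le_one]
      funext c
      simp [extend, h1])
    (fun g x hg => extend_move (hΦ g x hg))
  have hcut0 : 0 ≤ cutoff x := le_max_left _ _
  have hmean : ∀ i, mean x i = 0 := by
    intro i
    have h1 : ∑ j, extend Φ x (i, j) = q * mean x i := by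
      simp only [extend]
      rw [Finset.sum_add_distrib, ← Finset.mul_sum, ← Finset.mul_sum, Finset.sum_add_distrib,
        hsum x i]
      have : ∑ j, x (i, j) = q * mean x i := by rw [mean]; field_simp
      rw [this]
      simp
      ring
    rw [hx] at h1
    simp only [Pi.zero_apply, Finset.sum_const_zero] at h1
    rcases mul_eq_zero.1 h1.symm with h | h
    · exact absurd h hq0.ne'
    · exact h
  have hnorm : ‖x‖ ≤ q := by
    refine (pi_norm_le_iff_of_nonneg hq0.le).2 fun b => ?_
    obtain ⟨i, j⟩ := b
    have h1 : (q : ℝ) * x (i, j) = ∑ k, (x (i, j) - x (i, k)) := by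
      have : ∑ k, x (i, k) = q * mean x i := by rw [mean]; field_simp
      rw [Finset.sum_sub_distrib, this, hmean i]
      simp
    have h2 : |(q : ℝ) * x (i, j)| ≤ q * q := by
      rw [h1]
      refine (Finset.abs_sum_le_sum_abs _ _).trans ?_
      refine (Finset.sum_le_sum fun k _ => hrange i j k).trans ?_
      simp
    rw [abs_mul, abs_of_pos hq0] at h2
    exact le_of_mul_le_mul_left h2 hq0
  have hcut : cutoff x = 0 := by
    rw [cutoff, max_eq_left]
    exact (min_le_right _ _).trans (by linarith)
  refine ⟨x, funext fun b => ?_⟩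
  have := congrFun hx b
  simpa [extend, hcut, hmean] using this

end Zero

/-! ### The polynomials and their cells -/

section Polynomials

open Filter Topology Polynomial

/-- The part of the unit interval where `u j` is the largest of the polynomials `u`. -/
def cellOf {q : ℕ} (u : Fin q → ℝ[X]) (j : Fin q) : Set ℝ :=
  {x ∈ Set.Icc (0 : ℝ) 1 | ∀ l : Fin q, (u l).eval x ≤ (u j).eval x}

lemma isClosed_cellOf {q : ℕ} (u : Fin q → ℝ[X]) (j : Fin q) : IsClosed (cellOf u j) := by
  have : cellOf u j = Set.Icc (0 : ℝ) 1 ∩ ⋂ l, {x | (u l).eval x ≤ (u j).eval x} := by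
    ext x; simp [cellOf]
  rw [this]
  exact isClosed_Icc.inter
    (isClosed_iInter fun l => isClosed_le (u l).continuous (u j).continuous)

/-- The end points of the intervals are among `0`, `1` and the roots of the differences. -/
lemma cellOf_eq_iUnion {q : ℕ} (u : Fin q → ℝ[X]) (j : Fin q) :
    ∃ (m : ℕ) (a b : Fin m → ℝ), cellOf u j = ⋃ i, Set.Icc (a i) (b i) := by
  classical
  let D : Finset ℝ := {0, 1} ∪ Finset.univ.biUnion fun l => (u l - u j).roots.toFinset
  have hD0 : (0 : ℝ) ∈ D := by simp [D]
  have hD1 : (1 : ℝ) ∈ D := by simp [D]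
  have hD : ∀ l z, u l - u j ≠ 0 → (u l - u j).eval z = 0 → z ∈ D := by
    intro l z h1 h2
    refine Finset.mem_union_right _ (Finset.mem_biUnion.2 ⟨l, Finset.mem_univ _, ?_⟩)
    rw [Multiset.mem_toFinset, mem_roots h1]
    exact h2
  let E : Finset (ℝ × ℝ) := (D ×ˢ D).filter fun p => Set.Icc p.1 p.2 ⊆ cellOf u j
  have hE : cellOf u j = ⋃ p : E, Set.Icc p.1.1 p.1.2 := by
    refine Set.Subset.antisymm (fun t ht => ?_) (Set.iUnion_subset fun p =>
      (Finset.mem_filter.1 p.2).2)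
    obtain ⟨a, ha, hamax⟩ := (D.filter (· ≤ t)).exists_max_image id
      ⟨0, Finset.mem_filter.2 ⟨hD0, ht.1.1⟩⟩
    obtain ⟨b, hb, hbmin⟩ := (D.filter (t ≤ ·)).exists_min_image id
      ⟨1, Finset.mem_filter.2 ⟨hD1, ht.1.2⟩⟩
    simp only [Finset.mem_filter, id] at ha hb hamax hbmin
    have hsub : Set.Icc a b ⊆ cellOf u j := by
      intro s hs
      refine ⟨⟨(hamax 0 ⟨hD0, ht.1.1⟩).trans hs.1, hs.2.trans (hbmin 1 ⟨hD1, ht.1.2⟩)⟩, ?_⟩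
      intro l
      by_contra! hl
      have hps : 0 < (u l - u j).eval s := by rw [eval_sub]; linarith
      have hpt : (u l - u j).eval t ≤ 0 := by rw [eval_sub]; linarith [ht.2 l]
      have hne : u l - u j ≠ 0 := by rintro h; simp [h] at hps
      obtain ⟨z, hz, hz0⟩ := intermediate_value_uIcc (a := t) (b := s)
        (u l - u j).continuous.continuousOn (Set.mem_uIcc_of_le hpt hps.le)
      have hzD := hD l z hne hz0
      have hzs : z ≠ s := by
        rintro rfl
        exact hps.ne' hz0
      rcases Set.mem_uIcc.1 hz with h | h
      · exact hzs (le_antisymm h.2 (hs.2.trans (hbmin z ⟨hzD, h.1⟩)))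
      · exact hzs (le_antisymm ((hamax z ⟨hzD, h.2⟩).trans hs.1) h.1)
    exact Set.mem_iUnion.2 ⟨⟨(a, b), Finset.mem_filter.2
      ⟨Finset.mem_product.2 ⟨ha.1, hb.1⟩, hsub⟩⟩, ha.2, hb.2⟩
  refine ⟨E.card, fun i => (E.equivFin.symm i).1.1, fun i => (E.equivFin.symm i).1.2, ?_⟩
  rw [hE, E.equivFin.symm.surjective.iUnion_comp fun p : E => Set.Icc p.1.1 p.1.2]

lemma iUnion_cellOf {q : ℕ} [NeZero q] (u : Fin q → ℝ[X]) :
    ⋃ j, cellOf u j = Set.Icc (0 : ℝ) 1 := by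
  refine Set.Subset.antisymm (Set.iUnion_subset fun j t ht => ht.1) fun t ht => ?_
  obtain ⟨j, -, hj⟩ := (Finset.univ : Finset (Fin q)).exists_max_image (fun j => (u j).eval t)
    ⟨0, Finset.mem_univ _⟩
  exact Set.mem_iUnion.2 ⟨j, ht, fun l => hj l (Finset.mem_univ _)⟩

lemma ae_ne_eval {μ : Measure ℝ} (hμ : μ ≪ volume) {p r : ℝ[X]} (h : p ≠ r) :
    ∀ᵐ t ∂μ, p.eval t ≠ r.eval t := by
  have h1 : volume {t : ℝ | (p - r).IsRoot t} = 0 :=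
    (Polynomial.finite_setOfPred_isRoot (sub_ne_zero.2 h)).measure_zero _
  rw [ae_iff]
  convert hμ h1 using 2
  ext t
  simp [sub_eq_zero]

lemma sum_cellOf {q : ℕ} [NeZero q] {μ : Measure ℝ} [IsProbabilityMeasure μ] (hμ : μ ≪ volume)
    (hsupp : μ (Set.Icc (0 : ℝ) 1)ᶜ = 0) {u : Fin q → ℝ[X]} (hu : Function.Injective u) :
    ∑ j, μ (cellOf u j) = 1 := by
  rw [← tsum_fintype (L := .unconditional _), ← measure_iUnion₀ _ fun j => (isClosed_cellOf u j).nullMeasurableSet,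
    iUnion_cellOf]
  · exact (prob_compl_eq_zero_iff measurableSet_Icc).1 hsupp
  · intro j k hjk
    refine measure_mono_null ?_ (ae_iff.1 (ae_ne_eval hμ (hu.ne hjk)))
    rintro t ⟨hj, hk⟩
    simpa using le_antisymm (hk.2 j) (hj.2 k)

variable {n q : ℕ}

/-- A cutoff function of the distance of two columns. -/
noncomputable def wt (x : Fin n × Fin q → ℝ) (j k : Fin q) : ℝ :=
  max 0 (1 - 2 * dist (colm x j) (colm x k))

/-- A continuous count of the earlier columns close to the column `k`; it separates equal
columns. -/
noncomputable def rank (x : Fin n × Fin q → ℝ) (k : Fin q) : ℝ :=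
  ∑ j, if j < k then wt x j k else 0

/-- The polynomial with constant term `rank x j` whose other coefficients are the column `j`. -/
noncomputable def poly (x : Fin n × Fin q → ℝ) (j : Fin q) : ℝ[X] :=
  C (rank x j) + ∑ i : Fin n, C (x (i, j)) * X ^ ((i : ℕ) + 1)

lemma eval_poly (x : Fin n × Fin q → ℝ) (j : Fin q) (t : ℝ) :
    (poly x j).eval t = rank x j + ∑ i : Fin n, x (i, j) * t ^ ((i : ℕ) + 1) := by
  simp [poly, eval_finsetSum]

lemma degree_poly_le (x : Fin n × Fin q → ℝ) (j : Fin q) : (poly x j).degree ≤ n := by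
  refine (degree_add_le _ _).trans (max_le (degree_C_le.trans (by exact_mod_cast n.zero_le)) ?_)
  refine (degree_sum_le _ _).trans (Finset.sup_le fun i _ => ?_)
  refine (degree_C_mul_X_pow_le _ _).trans ?_
  exact_mod_cast i.2

lemma coeff_poly_zero (x : Fin n × Fin q → ℝ) (j : Fin q) : (poly x j).coeff 0 = rank x j := by
  simp [poly]

lemma coeff_poly_succ (x : Fin n × Fin q → ℝ) (j : Fin q) (i : Fin n) :
    (poly x j).coeff (i + 1) = x (i, j) := by
  simp [poly, coeff_X_pow, Fin.val_inj]

lemma poly_injective (x : Fin n × Fin q → ℝ) : Function.Injective (poly x) := by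
  have key : ∀ j k, j < k → poly x j ≠ poly x k := by
    intro j k hjk h
    have h0 : rank x j = rank x k := by rw [← coeff_poly_zero, h, coeff_poly_zero]
    have hcol : colm x j = colm x k := by
      funext i
      rw [colm, ← coeff_poly_succ x j i, h, coeff_poly_succ, colm]
    have hw : ∀ l, wt x l j = wt x l k := fun l => by rw [wt, hcol, wt]
    refine h0.not_lt (Finset.sum_lt_sum (fun l _ => ?_) ⟨j, Finset.mem_univ _, ?_⟩)
    · have h1 : 0 ≤ wt x l k := le_max_left _ _
      rw [hw]
      split_ifs with h2 h3 h3
      · exact le_rfl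
      · exact absurd (h2.trans hjk) h3
      · exact h1
      · exact le_rfl
    · simp [hjk, wt, hcol]
  intro j k h
  rcases lt_trichotomy j k with h1 | h1 | h1
  · exact absurd h (key j k h1)
  · exact h1
  · exact absurd h.symm (key k j h1)

lemma continuous_eval_poly (j : Fin q) (t : ℝ) :
    Continuous fun x : Fin n × Fin q → ℝ => (poly x j).eval t := by
  have hcol : ∀ k, Continuous fun x : Fin n × Fin q → ℝ => colm x k := fun k =>
    continuous_pi fun i => continuous_apply (i, k)
  simp only [eval_poly, rank, wt]
  refine Continuous.add (continuous_finsetSum _ fun k _ => ?_) (by fun_prop)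
  split_ifs
  · exact continuous_const.max
      (continuous_const.sub (continuous_const.mul ((hcol k).dist (hcol j))))
  · exact continuous_const

lemma poly_move (g : Equiv.Perm (Fin q)) (x : Fin n × Fin q → ℝ)
    (hg : ∀ j k, dist (colm x j) (colm x k) < 1 / 2 → j < k → g j < g k) (k : Fin q) :
    poly (move g x) (g k) = poly x k := by
  have hwt : ∀ j, wt (move g x) (g j) (g k) = wt x j k := fun j => by
    rw [wt, colm_move, colm_move, wt]
  have hrank : rank (move g x) (g k) = rank x k := by
    rw [rank, ← Equiv.sum_comp g, rank]
    refine Finset.sum_congr rfl fun j _ => ?_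
    rw [hwt]
    by_cases h : dist (colm x j) (colm x k) < 1 / 2
    · refine if_congr ⟨fun h1 => ?_, hg j k h⟩ rfl rfl
      by_contra h2
      rcases (not_lt.1 h2).eq_or_lt with h3 | h3
      · exact h1.ne (by rw [h3])
      · exact absurd h1 (hg k j (by rwa [dist_comm]) h3).not_gt
    · have : wt x j k = 0 := max_eq_left (by linarith)
      rw [this, ite_self, ite_self]
  rw [poly, hrank, poly]
  simp only [move_apply]

/-- By dominated convergence: off the finitely many points where two of the polynomials agree, the
membership in the cells is locally constant in the coefficients. -/
lemma continuous_measure_cell {μ : Measure ℝ} [IsProbabilityMeasure μ] (hμ : μ ≪ volume)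
    (j : Fin q) :
    Continuous fun x : Fin n × Fin q → ℝ => (μ (cellOf (poly x) j)).toReal := by
  rw [continuous_iff_continuousAt]
  intro x
  refine (ENNReal.tendsto_toReal (measure_ne_top _ _)).comp ?_
  refine tendsto_measure_of_ae_tendsto_indicator_of_isFiniteMeasure (𝓝 x)
    (isClosed_cellOf _ _).measurableSet (fun y => (isClosed_cellOf _ _).measurableSet) ?_
  have h : ∀ᵐ t ∂μ, ∀ l, l ≠ j → (poly x l).eval t ≠ (poly x j).eval t := by
    rw [ae_all_iff]
    intro l
    by_cases hl : l = j
    · simp [hl]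
    · filter_upwards [ae_ne_eval hμ ((poly_injective x).ne hl)] with t ht _ using ht
  filter_upwards [h] with t ht
  have h1 : ∀ᶠ y in 𝓝 x, ∀ l, ((poly y l).eval t ≤ (poly y j).eval t ↔
      (poly x l).eval t ≤ (poly x j).eval t) := by
    rw [eventually_all]
    intro l
    by_cases hl : l = j
    · simp [hl]
    have cl := (continuous_eval_poly (n := n) l t).tendsto x
    have cj := (continuous_eval_poly (n := n) j t).tendsto x
    rcases lt_or_gt_of_ne (ht l hl) with h2 | h2
    · filter_upwards [cl.eventually_lt cj h2] with y hy
      exact iff_of_true hy.le h2.le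
    · filter_upwards [cj.eventually_lt cl h2] with y hy
      exact iff_of_false hy.not_ge h2.not_ge
  filter_upwards [h1] with y hy
  exact and_congr_right fun _ => forall_congr' hy

/-- The equipartition, in terms of the cells `cellOf`. -/
theorem exists_equipartition (μs : Fin n → Measure ℝ) (hprob : ∀ i, IsProbabilityMeasure (μs i))
    (hsupp : ∀ i, μs i (Set.Icc (0 : ℝ) 1)ᶜ = 0) (hac : ∀ i, μs i ≪ volume) (hq : IsPrimePow q) :
    ∃ u : Fin q → ℝ[X], Function.Injective u ∧ (∀ j, (u j).degree ≤ n) ∧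
      ∀ j i, μs i (cellOf u j) = 1 / q := by
  have : NeZero q := ⟨hq.pos.ne'⟩
  have hq0 : (0 : ℝ) < q := by exact_mod_cast hq.pos
  rcases Nat.eq_zero_or_pos n with rfl | hn
  · refine ⟨fun j => C (j : ℝ), fun j k h => ?_, fun j => degree_C_le, fun j i => i.elim0⟩
    simpa [Fin.val_inj] using h
  have hzero : ∃ x : Fin n × Fin q → ℝ,
      (fun b => (μs b.1 (cellOf (poly x) b.2)).toReal - 1 / q : Fin n × Fin q → ℝ) = 0 := by
    refine exists_zero hn hq
      (fun x b => (μs b.1 (cellOf (poly x) b.2)).toReal - 1 / q) ?_ ?_ ?_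
    · exact continuous_pi fun b => (continuous_measure_cell (hac b.1) b.2).sub continuous_const
    · intro x i
      have h1 := congrArg ENNReal.toReal (sum_cellOf (hac i) (hsupp i) (poly_injective x))
      rw [ENNReal.toReal_sum fun j _ => measure_ne_top _ _, ENNReal.toReal_one] at h1
      rw [Finset.sum_sub_distrib, h1]
      simp [hq0.ne']
    · intro g x hg
      have hp := poly_move g x hg
      rw [eq_comm, move_eq_iff]
      rintro ⟨i, j⟩
      have : cellOf (poly (move g x)) (g j) = cellOf (poly x) j := by
        ext t
        simp only [cellOf, Set.mem_ofPred_eq]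
        rw [g.surjective.forall]
        simp only [hp]
      change (μs i (cellOf (poly (move g x)) (g j))).toReal - 1 / q = _
      rw [this]
  obtain ⟨x, hx⟩ := hzero
  refine ⟨poly x, poly_injective x, degree_poly_le x, fun j i => ?_⟩
  have h1 := congrFun hx (i, j)
  simp only [Pi.zero_apply] at h1
  rw [← ENNReal.ofReal_toReal (measure_ne_top (μs i) (cellOf (poly x) j)), sub_eq_zero.1 h1,
    ENNReal.ofReal_div_of_pos hq0, ENNReal.ofReal_one, ENNReal.ofReal_natCast]

end Polynomials

end Equipart

/-- Any `n` absolutely continuous probability measures on `[0,1]` can be simultaneously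
partitioned into `q` equal parts by the generalized Voronoi partition associated with `q`
pairwise distinct polynomials of degree at most `n`; each part is a finite union of closed
intervals. Here `q` is a prime power. -/
theorem stmt_15 (n : ℕ) (μs : Fin n → Measure ℝ)
    (hprob : ∀ i, IsProbabilityMeasure (μs i))
    (hsupp : ∀ i, μs i (Set.Icc (0 : ℝ) 1)ᶜ = 0)
    (hac : ∀ i, μs i ≪ volume)
    (q : ℕ) (hq : IsPrimePow q) :
    ∃ u : Fin q → Polynomial ℝ, Function.Injective u ∧ (∀ j, (u j).degree ≤ n) ∧
      ∀ j : Fin q,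
        (∃ (m : ℕ) (a b : Fin m → ℝ),
          {x ∈ Set.Icc (0 : ℝ) 1 | ∀ l : Fin q, (u l).eval x ≤ (u j).eval x} =
            ⋃ i, Set.Icc (a i) (b i)) ∧
        ∀ i : Fin n,
          μs i {x ∈ Set.Icc (0 : ℝ) 1 | ∀ l : Fin q, (u l).eval x ≤ (u j).eval x} = 1 / q := by
  obtain ⟨u, hu, hdeg, h⟩ := Equipart.exists_equipartition μs hprob hsupp hac hq
  exact ⟨u, hu, hdeg, fun j => ⟨Equipart.cellOf_eq_iUnion u j, h j⟩⟩
end
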